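/- arXiv:1711.09768 — 10 statements merged into one kernel-verified Lean document; each statement's English description precedes it below -/
import Mathlib

section
/- Fix real numbers p > 0, a > 0, p_I ≥ 0, c_I ∈ [0,1] and R̄ > 0, and set β = 1 − p/(2^{2·R̄} − 1). For every p_S ≥ 0 and c_S ∈ [0,1], the primary-user rate constraint R(p_S, c_S) ≥ R̄ holds if and only if a²·p_S²·(1 − c_S²) ≤ (1 − β)·(p + 2·(1 + a·p_S + p_I)) − 1 − 2·(a·p_S + p_I) − p_I²·(1 − c_I²) − 2·a·p_S·p_I·(1 − c_S·c_I). -/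
/-- Primary-user rate in the single-secondary-user canonical model: the PU has
canonical power `p`, the SU interferes through gain `a` with power `pS` and
circularity coefficient `cS`, and the PU receiver is corrupted by improper
noise of power `pI` and circularity coefficient `cI` (plus unit proper noise). -/
noncomputable def Rpu (p a pI cI pS cS : ℝ) : ℝ :=
  (1/2) * Real.logb 2 (((1 + p + a*pS + pI)^2 - (a*pS*cS + pI*cI)^2) /
    ((1 + a*pS + pI)^2 - (a*pS*cS + pI*cI)^2))

/-!
Write `y = 1 + a * pS + pI` for the total power of interference and noise at the primary receiver
and `q = a * pS * cS + pI * cI` for its complementary variance. Since `|q| < y`, the fraction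
inside the logarithm is a quotient of positive numbers, and its numerator exceeds the denominator
`y² - q²` by `p * (p + 2 * y)`, which does not depend on `q`. The rate constraint is therefore an
upper bound on `y² - q²`, which becomes the stated inequality once `y` and `q` are expanded.
-/

section OrderedRing

variable {R : Type*} [Ring R] [LinearOrder R] [IsStrictOrderedRing R]

lemma sq_sub_sq_pos_of_abs_lt {q y : R} (h : |q| < y) : 0 < y ^ 2 - q ^ 2 :=
  sub_pos.2 (sq_lt_sq.2 (h.trans_le (le_abs_self y)))

lemma abs_mul_add_mul_le_add {s t c d : R} (hs : 0 ≤ s) (ht : 0 ≤ t) (hc : |c| ≤ 1)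
    (hd : |d| ≤ 1) : |s * c + t * d| ≤ s + t :=
  calc |s * c + t * d| ≤ |s * c| + |t * d| := abs_add_le _ _
    _ = s * |c| + t * |d| := by rw [abs_mul, abs_mul, abs_of_nonneg hs, abs_of_nonneg ht]
    _ ≤ s + t := add_le_add (mul_le_of_le_one_right hs hc) (mul_le_of_le_one_right ht hd)

end OrderedRing

lemma mul_le_add_iff_le_div {𝕜 : Type*} [Field 𝕜] [LinearOrder 𝕜] [IsStrictOrderedRing 𝕜]
    {k x d : 𝕜} (hk : 1 < k) : k * x ≤ x + d ↔ x ≤ d / (k - 1) := by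
  rw [le_div_iff₀ (sub_pos.2 hk), mul_sub_one, sub_le_iff_le_add', mul_comm]

lemma le_half_mul_logb_div_iff {b x y R : ℝ} (hb : 1 < b) (hx : 0 < x) (hy : 0 < y) :
    R ≤ 1 / 2 * Real.logb b (x / y) ↔ b ^ (2 * R) * y ≤ x := by
  rw [← le_div_iff₀ hy, ← Real.le_logb_iff_rpow_le hb (div_pos hx hy), one_div,
    le_inv_mul_iff₀ two_pos]

lemma le_half_mul_logb_sq_sub_sq_div_iff {b p q y R : ℝ} (hb : 1 < b) (hp : 0 ≤ p)
    (hq : |q| < y) (hR : 0 < R) :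
    R ≤ 1 / 2 * Real.logb b (((y + p) ^ 2 - q ^ 2) / (y ^ 2 - q ^ 2)) ↔
      y ^ 2 - q ^ 2 ≤ p / (b ^ (2 * R) - 1) * (p + 2 * y) := by
  have hK : 1 < b ^ (2 * R) := Real.one_lt_rpow hb (mul_pos two_pos hR)
  have hnum : 0 < (y + p) ^ 2 - q ^ 2 :=
    sq_sub_sq_pos_of_abs_lt (hq.trans_le (le_add_of_nonneg_right hp))
  have hgap : (y + p) ^ 2 - q ^ 2 = y ^ 2 - q ^ 2 + p * (p + 2 * y) := by ring
  rw [le_half_mul_logb_div_iff hb hnum (sq_sub_sq_pos_of_abs_lt hq), hgap,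
    mul_le_add_iff_le_div hK, div_mul_eq_mul_div]

/-- A negative circularity coefficient models an improper component in phase opposition. -/
theorem stmt0_general (p a pI cI Rbar β pS cS : ℝ)
    (hp : 0 ≤ p) (ha : 0 ≤ a) (hpI : 0 ≤ pI) (hcI : |cI| ≤ 1)
    (hR : 0 < Rbar) (hβ : β = 1 - p / ((2 : ℝ) ^ (2 * Rbar) - 1))
    (hpS : 0 ≤ pS) (hcS : |cS| ≤ 1) :
    Rpu p a pI cI pS cS ≥ Rbar ↔
      a^2 * pS^2 * (1 - cS^2) ≤
        (1 - β) * (p + 2*(1 + a*pS + pI)) - 1 - 2*(a*pS + pI)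
          - pI^2 * (1 - cI^2) - 2*a*pS*pI*(1 - cS*cI) := by
  have hq : |a * pS * cS + pI * cI| < 1 + a * pS + pI := by
    linarith [abs_mul_add_mul_le_add (mul_nonneg ha hpS) hpI hcS hcI]
  have hsum : 1 + p + a * pS + pI = 1 + a * pS + pI + p := by ring
  have hβ' : p / ((2 : ℝ) ^ (2 * Rbar) - 1) = 1 - β := by rw [hβ, sub_sub_cancel]
  have hexpand : (1 + a * pS + pI) ^ 2 - (a * pS * cS + pI * cI) ^ 2 =
      a ^ 2 * pS ^ 2 * (1 - cS ^ 2) + 2 * a * pS * pI * (1 - cS * cI) + pI ^ 2 * (1 - cI ^ 2)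
        + 2 * (a * pS + pI) + 1 := by ring
  rw [Rpu, ge_iff_le, hsum, le_half_mul_logb_sq_sub_sq_div_iff one_lt_two hp hq hR, hβ', hexpand]
  simp only [le_sub_iff_add_le]

/-- the PU rate constraint `Rpu ≥ R̄` holds iff the quadratic
inequality (Eq. (12) in the paper) holds. -/
theorem stmt0 (p a pI cI Rbar β pS cS : ℝ)
    (hp : 0 < p) (ha : 0 < a) (hpI : 0 ≤ pI) (hcI : cI ∈ Set.Icc (0:ℝ) 1)
    (hR : 0 < Rbar) (hβ : β = 1 - p / ((2:ℝ) ^ (2 * Rbar) - 1))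
    (hpS : 0 ≤ pS) (hcS : cS ∈ Set.Icc (0:ℝ) 1) :
    Rpu p a pI cI pS cS ≥ Rbar ↔
      a^2 * pS^2 * (1 - cS^2) ≤
        (1 - β) * (p + 2*(1 + a*pS + pI)) - 1 - 2*(a*pS + pI)
          - pI^2 * (1 - cI^2) - 2*a*pS*pI*(1 - cS*cI) := by
  exact stmt0_general p a pI cI Rbar β pS cS hp.le ha.le hpI
    ((abs_of_nonneg hcI.1).trans_le hcI.2) hR hβ hpS ((abs_of_nonneg hcS.1).trans_le hcS.2)
end

section
/- Fix real numbers p > 0, a > 0, p_I ≥ 0, c_I ∈ [0,1], R̄ > 0 and a power budget P_S ≥ 0. There exist p_S ∈ [0, P_S] and c_S ∈ [0,1] with R(p_S, c_S) ≥ R̄ if and only if R(0, 0) ≥ R̄; that is, the problem 𝒫_IN is feasible exactly when the required primary rate does not exceed the primary rate achievable in the absence of secondary interference. -/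
/-!
Rotating the complex received signal to the principal axes of the noise turns the primary link into
two real Gaussian channels of signal-to-noise ratios `p / (1 + a pS (1 ± cS) + pI (1 ± cI))`, and
its rate is the sum of their capacities. As `|cS| ≤ 1`, secondary interference adds noise to
both real channels, so each capacity, and hence the rate, is largest when there is none.
-/

/-- The Shannon capacity, in bits per use, of a real Gaussian channel with signal power `p` and
noise power `v`. -/
noncomputable def gaussianCapacity (p v : ℝ) : ℝ :=
  (1 / 2) * Real.logb 2 (1 + p / v)

theorem gaussianCapacity_antitoneOn {p : ℝ} (hp : 0 ≤ p) :
    AntitoneOn (gaussianCapacity p) (Set.Ioi 0) := by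
  intro v (hv : 0 < v) w (hw : 0 < w) hvw
  unfold gaussianCapacity
  gcongr
  exact one_lt_two

/-- Twice the noise power at the primary receiver along one principal axis of the noise; the factor
two matches a signal of total complex power `p`, which has power `p / 2` along each axis. The
orthogonal axis is obtained by negating both circularity coefficients. -/
def axisNoise (a pI cI pS cS : ℝ) : ℝ :=
  1 + a * pS * (1 + cS) + pI * (1 + cI)

theorem axisNoise_monotone {a cS : ℝ} (pI cI : ℝ) (ha : 0 ≤ a) (hcS : -1 ≤ cS) :
    Monotone (axisNoise a pI cI · cS) := by
  intro x y hxy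
  have hcS' : 0 ≤ 1 + cS := by linarith
  dsimp only [axisNoise]
  gcongr

theorem axisNoise_pos {a pI cI pS cS : ℝ} (ha : 0 ≤ a) (hpI : 0 ≤ pI) (hcI : -1 ≤ cI)
    (hpS : 0 ≤ pS) (hcS : -1 ≤ cS) : 0 < axisNoise a pI cI pS cS := by
  have hcS' : 0 ≤ 1 + cS := by linarith
  have hcI' : 0 ≤ 1 + cI := by linarith
  unfold axisNoise
  positivity

theorem rpu_eq_gaussianCapacity_add {p a pI cI pS cS : ℝ} (hp : 0 ≤ p)
    (hpos : 0 < axisNoise a pI cI pS cS) (hneg : 0 < axisNoise a pI (-cI) pS (-cS)) :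
    Rpu p a pI cI pS cS =
      gaussianCapacity p (axisNoise a pI cI pS cS) +
        gaussianCapacity p (axisNoise a pI (-cI) pS (-cS)) := by
  have hden : (1 + a * pS + pI) ^ 2 - (a * pS * cS + pI * cI) ^ 2 =
      axisNoise a pI cI pS cS * axisNoise a pI (-cI) pS (-cS) := by
    unfold axisNoise; ring
  have hnum : (1 + p + a * pS + pI) ^ 2 - (a * pS * cS + pI * cI) ^ 2 =
      (axisNoise a pI cI pS cS + p) * (axisNoise a pI (-cI) pS (-cS) + p) := by
    unfold axisNoise; ring
  have hsnr {v : ℝ} (hv : 0 < v) : (v + p) / v = 1 + p / v := by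
    rw [add_div, div_self hv.ne']
  unfold Rpu gaussianCapacity
  rw [hnum, hden, mul_div_mul_comm, hsnr hpos, hsnr hneg,
    Real.logb_mul (by positivity) (by positivity), mul_add]

theorem rpu_antitoneOn_power {p a pI cI cS : ℝ} (hp : 0 ≤ p) (ha : 0 ≤ a) (hpI : 0 ≤ pI)
    (hcI : |cI| ≤ 1) (hcS : |cS| ≤ 1) :
    AntitoneOn (Rpu p a pI cI · cS) (Set.Ici 0) := by
  obtain ⟨hcI_ge, hcI_le⟩ := abs_le.mp hcI
  obtain ⟨hcS_ge, hcS_le⟩ := abs_le.mp hcS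
  have hpos {x : ℝ} (hx : 0 ≤ x) : 0 < axisNoise a pI cI x cS :=
    axisNoise_pos ha hpI hcI_ge hx hcS_ge
  have hneg {x : ℝ} (hx : 0 ≤ x) : 0 < axisNoise a pI (-cI) x (-cS) :=
    axisNoise_pos ha hpI (neg_le_neg hcI_le) hx (neg_le_neg hcS_le)
  intro x (hx : 0 ≤ x) y (hy : 0 ≤ y) hxy
  dsimp only
  rw [rpu_eq_gaussianCapacity_add hp (hpos hx) (hneg hx),
    rpu_eq_gaussianCapacity_add hp (hpos hy) (hneg hy)]
  exact add_le_add
    (gaussianCapacity_antitoneOn hp (hpos hx) (hpos hy)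
      (axisNoise_monotone pI cI ha hcS_ge hxy))
    (gaussianCapacity_antitoneOn hp (hneg hx) (hneg hy)
      (axisNoise_monotone pI (-cI) ha (neg_le_neg hcS_le) hxy))

theorem rpu_zero_power (p a pI cI cS : ℝ) : Rpu p a pI cI 0 cS = Rpu p a pI cI 0 0 := by
  simp only [Rpu, mul_zero, zero_mul]

/-- problem `𝒫_IN` is feasible iff the required primary rate does not
exceed the rate achievable in the absence of secondary interference. -/
theorem stmt1 (p a pI cI Rbar PS : ℝ)
    (hp : 0 < p) (ha : 0 < a) (hpI : 0 ≤ pI) (hcI : cI ∈ Set.Icc (0:ℝ) 1)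
    (hR : 0 < Rbar) (hPS : 0 ≤ PS) :
    (∃ pS cS : ℝ, pS ∈ Set.Icc 0 PS ∧ cS ∈ Set.Icc (0:ℝ) 1 ∧
      Rpu p a pI cI pS cS ≥ Rbar) ↔ Rpu p a pI cI 0 0 ≥ Rbar := by
  constructor
  · rintro ⟨pS, cS, ⟨hpS, -⟩, hcS, hrate⟩
    have abs_le_one {c : ℝ} (hc : c ∈ Set.Icc (0 : ℝ) 1) : |c| ≤ 1 :=
      (abs_of_nonneg hc.1).trans_le hc.2
    calc
      Rbar ≤ Rpu p a pI cI pS cS := hrate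
      _ ≤ Rpu p a pI cI 0 cS :=
        rpu_antitoneOn_power hp.le ha.le hpI (abs_le_one hcI) (abs_le_one hcS)
          Set.self_mem_Ici hpS hpS
      _ = Rpu p a pI cI 0 0 := rpu_zero_power p a pI cI cS
  · exact fun hrate ↦ ⟨0, 0, ⟨le_rfl, hPS⟩, ⟨le_rfl, zero_le_one⟩, hrate⟩
end

section
/- Fix p > 0, a > 0, p_I ≥ 0, c_I ∈ [0,1], R̄ > 0 and β = 1 − p/(2^{2·R̄} − 1). Let q : ℝ → ℝ be differentiable at a point c ∈ [0,1] and satisfy the tightness identity a²·q(x)²·(1 − x²) = (1 − β)·(p + 2·(1 + a·q(x) + p_I)) − 1 − 2·(a·q(x) + p_I) − p_I²·(1 − c_I²) − 2·a·q(x)·p_I·(1 − x·c_I) for all x in an open interval containing c. If a·q(c)·(1 − c²) + p_I·(1 − c·c_I) + β > 0, then the derivative of q at c equals q(c)·(a·q(c)·c + p_I·c_I) / (a·q(c)·(1 − c²) + p_I·(1 − c·c_I) + β). -/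
/-- Tightness identity characterizing `q x`, the maximum secondary transmit power
at circularity coefficient `x` such that the primary rate constraint is tight. -/
def Tight (p a pI cI β : ℝ) (q : ℝ → ℝ) (x : ℝ) : Prop :=
  a^2 * (q x)^2 * (1 - x^2) =
    (1 - β) * (p + 2*(1 + a * q x + pI)) - 1 - 2*(a * q x + pI)
      - pI^2 * (1 - cI^2) - 2 * a * q x * pI * (1 - x * cI)

/-!
Collected in powers of `q x`, the tightness identity is a quadratic equation whose coefficients are
polynomials in `x` and whose constant term does not depend on `x`. Implicit differentiation of
`A y² + B y + C = 0` gives `(2 A y + B) y' = -(A' y² + B' y + C')`, and at `c` the factor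
`2 A y + B` is `2 a` times the denominator of the claimed formula.
-/

open Filter Topology

theorem hasDerivAt_quadratic_comp {𝕜 : Type*} [NontriviallyNormedField 𝕜] {A B C y : 𝕜 → 𝕜}
    {A' B' C' y' t : 𝕜} (hA : HasDerivAt A A' t) (hB : HasDerivAt B B' t)
    (hC : HasDerivAt C C' t) (hy : HasDerivAt y y' t) :
    HasDerivAt (fun x => A x * y x ^ 2 + B x * y x + C x)
      ((2 * A t * y t + B t) * y' + (A' * y t ^ 2 + B' * y t + C')) t := by
  refine (((hA.fun_mul (hy.fun_pow 2)).fun_add (hB.fun_mul hy)).fun_add hC).congr_deriv ?_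
  push_cast
  ring

theorem deriv_eq_div_of_eventually_quadratic_eq_zero {𝕜 : Type*} [NontriviallyNormedField 𝕜]
    {A B C y : 𝕜 → 𝕜} {A' B' C' t : 𝕜} (hA : HasDerivAt A A' t) (hB : HasDerivAt B B' t)
    (hC : HasDerivAt C C' t) (hy : DifferentiableAt 𝕜 y t)
    (hroot : ∀ᶠ x in 𝓝 t, A x * y x ^ 2 + B x * y x + C x = 0)
    (hsimple : 2 * A t * y t + B t ≠ 0) :
    deriv y t = -(A' * y t ^ 2 + B' * y t + C') / (2 * A t * y t + B t) := by
  have himplicit : (2 * A t * y t + B t) * deriv y t + (A' * y t ^ 2 + B' * y t + C') = 0 :=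
    (hasDerivAt_quadratic_comp hA hB hC hy.hasDerivAt).unique
      ((hasDerivAt_const t 0).congr_of_eventuallyEq hroot)
  rw [eq_div_iff hsimple]
  linear_combination himplicit

theorem tight_iff_quadratic_eq_zero {p a pI cI β : ℝ} {q : ℝ → ℝ} {x : ℝ} :
    Tight p a pI cI β q x ↔
      a ^ 2 * (1 - x ^ 2) * q x ^ 2 + 2 * a * (pI * (1 - x * cI) + β) * q x +
        (1 + 2 * pI + pI ^ 2 * (1 - cI ^ 2) - (1 - β) * (p + 2 * (1 + pI))) = 0 := by
  unfold Tight
  constructor <;> intro h <;> linear_combination h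

theorem stmt2_general {p a pI cI β c : ℝ} {q : ℝ → ℝ} (ha : a ≠ 0)
    (hdiff : DifferentiableAt ℝ q c) (htight : ∀ᶠ x in 𝓝 c, Tight p a pI cI β q x)
    (hden : a * q c * (1 - c ^ 2) + pI * (1 - c * cI) + β ≠ 0) :
    deriv q c = q c * (a * q c * c + pI * cI) /
      (a * q c * (1 - c ^ 2) + pI * (1 - c * cI) + β) := by
  have hA : HasDerivAt (fun x => a ^ 2 * (1 - x ^ 2)) (a ^ 2 * -(2 * c)) c := by
    simpa using ((hasDerivAt_pow 2 c).const_sub 1).const_mul (a ^ 2)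
  have hB : HasDerivAt (fun x => 2 * a * (pI * (1 - x * cI) + β)) (2 * a * (pI * -cI)) c :=
    (((hasDerivAt_mul_const cI).const_sub 1).const_mul pI |>.add_const β).const_mul (2 * a)
  have hfactor : 2 * (a ^ 2 * (1 - c ^ 2)) * q c + 2 * a * (pI * (1 - c * cI) + β) =
      2 * a * (a * q c * (1 - c ^ 2) + pI * (1 - c * cI) + β) := by ring
  have h2a : 2 * a ≠ 0 := mul_ne_zero two_ne_zero ha
  rw [deriv_eq_div_of_eventually_quadratic_eq_zero hA hB (hasDerivAt_const c _) hdiff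
    (htight.mono fun _ => tight_iff_quadratic_eq_zero.1) (hfactor ▸ mul_ne_zero h2a hden),
    hfactor, ← mul_div_mul_left (q c * _) _ h2a]
  ring

/-- closed-form derivative of the tolerable-power function `q`. -/
theorem stmt2 (p a pI cI Rbar β c : ℝ) (q : ℝ → ℝ)
    (hp : 0 < p) (ha : 0 < a) (hpI : 0 ≤ pI) (hcI : cI ∈ Set.Icc (0:ℝ) 1)
    (hR : 0 < Rbar) (hβ : β = 1 - p / ((2:ℝ) ^ (2 * Rbar) - 1))
    (hc : c ∈ Set.Icc (0:ℝ) 1)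
    (hdiff : DifferentiableAt ℝ q c)
    (htight : ∃ ε > (0:ℝ), ∀ x ∈ Set.Ioo (c - ε) (c + ε), Tight p a pI cI β q x)
    (hden : 0 < a * q c * (1 - c^2) + pI * (1 - c * cI) + β) :
    deriv q c = q c * (a * q c * c + pI * cI) /
      (a * q c * (1 - c^2) + pI * (1 - c * cI) + β) := by
  have hnhds := (nhds_basis_Ioo_pos c).eventually_iff.2 htight
  exact stmt2_general ha.ne' hdiff hnhds hden.ne'
end

section
/- Fix p > 0, a > 0, p_I ≥ 0, c_I ∈ [0,1], R̄ > 0 and β = 1 − p/(2^{2·R̄} − 1). Let q : ℝ → ℝ be differentiable at c ∈ [0,1], satisfy the tightness identity on an open interval containing c, with q(c) > 0 and a·q(c)·(1 − c²) + p_I·(1 − c·c_I) + β > 0. Then the function f(x) = R_S(q(x), x) has nonnegative derivative at c if and only if a·q(c)·c·(1 − (p_I + β)/a) + p_I·c_I·(1 + q(c)) ≥ 0. -/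
/-- Secondary-user rate after zero-forcing. -/
noncomputable def RS (pS cS : ℝ) : ℝ :=
  (1/2) * Real.logb 2 (1 + pS * (pS * (1 - cS^2) + 2))

/-!
Collecting the terms of the tightness identity that depend on `x` shows that
`a · (a q² (1 - x²) + 2 q (p_I (1 - x c_I) + β))` is constant near `c`. Differentiating this gives
`q'(c) · D = q(c) · (a c q(c) + p_I c_I)` with `D = a q(c) (1 - c²) + p_I (1 - c c_I) + β > 0`.
Eliminating `q'(c)` from the derivative of the rate turns that derivative into a positive multiple
of `a q(c) c (1 - (p_I + β) / a) + p_I c_I (1 + q(c))`.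
-/

section

open scoped Topology

variable {p a pI cI β c q' : ℝ} {q : ℝ → ℝ}

theorem hasDerivAt_sq_mul_one_sub_sq (hq' : HasDerivAt q q' c) :
    HasDerivAt (fun x => q x ^ 2 * (1 - x ^ 2)) (2 * q c * (q' * (1 - c ^ 2) - c * q c)) c := by
  refine ((hq'.fun_pow 2).fun_mul ((hasDerivAt_pow 2 c).const_sub 1)).congr_deriv ?_
  push_cast
  ring

theorem hasDerivAt_RS_comp (hq' : HasDerivAt q q' c)
    (hne : 1 + q c * (q c * (1 - c ^ 2) + 2) ≠ 0) :
    HasDerivAt (fun x => RS (q x) x)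
      ((q' * (q c * (1 - c ^ 2) + 1) - c * q c ^ 2) /
        ((1 + q c * (q c * (1 - c ^ 2) + 2)) * Real.log 2)) c := by
  have hasDerivAt_arg : HasDerivAt (fun x => 1 + q x * (q x * (1 - x ^ 2) + 2))
      (2 * (q' * (q c * (1 - c ^ 2) + 1) - c * q c ^ 2)) c := by
    have arg_eq (x : ℝ) :
        1 + q x * (q x * (1 - x ^ 2) + 2) = 1 + (q x ^ 2 * (1 - x ^ 2) + 2 * q x) := by ring
    simp only [arg_eq]
    refine (((hasDerivAt_sq_mul_one_sub_sq hq').fun_add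
      (hq'.const_mul 2)).const_add 1).congr_deriv ?_
    ring
  refine (((hasDerivAt_arg.log hne).div_const (Real.log 2)).const_mul (1 / 2)).congr_deriv ?_
  field_simp

theorem one_add_mul_mul_one_sub_sq_add_two_pos {s : ℝ} (hs : 0 ≤ s) (hc : |c| ≤ 1) :
    0 < 1 + s * (s * (1 - c ^ 2) + 2) := by
  have one_sub_sq_nonneg : 0 ≤ 1 - c ^ 2 := sub_nonneg.2 ((sq_le_one_iff_abs_le_one c).2 hc)
  positivity

theorem tight_iff_eq_const {x : ℝ} :
    Tight p a pI cI β q x ↔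
      a * (a * (q x ^ 2 * (1 - x ^ 2)) + 2 * (q x * (pI * (1 - x * cI) + β))) =
        (1 - β) * (p + 2 * (1 + pI)) - 1 - 2 * pI - pI ^ 2 * (1 - cI ^ 2) := by
  unfold Tight
  constructor <;> intro h <;> linear_combination h

theorem deriv_mul_eq_of_eventually_tight (ha : a ≠ 0) (hq' : HasDerivAt q q' c)
    (htight : ∀ᶠ x in 𝓝 c, Tight p a pI cI β q x) :
    q' * (a * q c * (1 - c ^ 2) + pI * (1 - c * cI) + β) = q c * (a * c * q c + pI * cI) := by
  have hasDerivAt_linear : HasDerivAt (fun x => pI * (1 - x * cI) + β) (-(pI * cI)) c := by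
    simpa using ((((hasDerivAt_id c).mul_const cI).const_sub 1).const_mul pI).add_const β
  have hasDerivAt_varying := (((hasDerivAt_sq_mul_one_sub_sq hq').const_mul a).fun_add
    ((hq'.fun_mul hasDerivAt_linear).const_mul 2)).const_mul a
  have hasDerivAt_zero := (hasDerivAt_const c _).congr_of_eventuallyEq
    (htight.mono fun _ hx => tight_iff_eq_const.1 hx)
  apply mul_left_cancel₀ (mul_ne_zero two_ne_zero ha)
  linear_combination hasDerivAt_varying.unique hasDerivAt_zero

theorem hasDerivAt_RS_comp_of_eventually_tight (ha : a ≠ 0) (hq' : HasDerivAt q q' c)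
    (htight : ∀ᶠ x in 𝓝 c, Tight p a pI cI β q x)
    (hden : a * q c * (1 - c ^ 2) + pI * (1 - c * cI) + β ≠ 0)
    (hne : 1 + q c * (q c * (1 - c ^ 2) + 2) ≠ 0) :
    HasDerivAt (fun x => RS (q x) x)
      (q c / ((a * q c * (1 - c ^ 2) + pI * (1 - c * cI) + β) *
          ((1 + q c * (q c * (1 - c ^ 2) + 2)) * Real.log 2)) *
        (a * q c * c * (1 - (pI + β) / a) + pI * cI * (1 + q c))) c := by
  have numerator_mul_den :
      (q' * (q c * (1 - c ^ 2) + 1) - c * q c ^ 2) *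
          (a * q c * (1 - c ^ 2) + pI * (1 - c * cI) + β) =
        q c * (a * q c * c * (1 - (pI + β) / a) + pI * cI * (1 + q c)) := by
    have implicit_deriv := deriv_mul_eq_of_eventually_tight ha hq' htight
    field_simp
    linear_combination (q c * (1 - c ^ 2) + 1) * implicit_deriv
  refine (hasDerivAt_RS_comp hq' hne).congr_deriv ?_
  rw [div_mul_eq_mul_div, ← numerator_mul_den,
    mul_comm (_ + β) (_ * Real.log 2), mul_div_mul_right _ _ hden]

theorem stmt3_general (ha : a ≠ 0) (hc : |c| ≤ 1) (hdiff : DifferentiableAt ℝ q c)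
    (htight : ∀ᶠ x in 𝓝 c, Tight p a pI cI β q x) (hq : 0 < q c)
    (hden : 0 < a * q c * (1 - c ^ 2) + pI * (1 - c * cI) + β) :
    0 ≤ deriv (fun x => RS (q x) x) c ↔
      0 ≤ a * q c * c * (1 - (pI + β) / a) + pI * cI * (1 + q c) := by
  have arg_pos := one_add_mul_mul_one_sub_sq_add_two_pos hq.le hc
  have log_two_pos : 0 < Real.log 2 := Real.log_pos one_lt_two
  rw [(hasDerivAt_RS_comp_of_eventually_tight ha hdiff.hasDerivAt htight hden.ne'
    arg_pos.ne').deriv]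
  exact mul_nonneg_iff_of_pos_left (div_pos hq (mul_pos hden (mul_pos arg_pos log_two_pos)))

end

/-- Lemma 2: the secondary rate along the tight constraint,
`f x = R_S(q x, x)`, is non-decreasing at `c` iff
`a·q(c)·c·(1 − (p_I + β)/a) + p_I·c_I·(1 + q(c)) ≥ 0`. -/
theorem stmt3 (p a pI cI Rbar β c : ℝ) (q : ℝ → ℝ)
    (hp : 0 < p) (ha : 0 < a) (hpI : 0 ≤ pI) (hcI : cI ∈ Set.Icc (0:ℝ) 1)
    (hR : 0 < Rbar) (hβ : β = 1 - p / ((2:ℝ) ^ (2 * Rbar) - 1))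
    (hc : c ∈ Set.Icc (0:ℝ) 1)
    (hdiff : DifferentiableAt ℝ q c)
    (htight : ∃ ε > (0:ℝ), ∀ x ∈ Set.Ioo (c - ε) (c + ε), Tight p a pI cI β q x)
    (hq : 0 < q c)
    (hden : 0 < a * q c * (1 - c^2) + pI * (1 - c * cI) + β) :
    0 ≤ deriv (fun x => RS (q x) x) c ↔
      0 ≤ a * q c * c * (1 - (pI + β) / a) + pI * cI * (1 + q c) := by
  obtain ⟨ε, hε, htight⟩ := htight
  exact stmt3_general ha.ne' (abs_le.2 ⟨by linarith [hc.1], hc.2⟩) hdiff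
    (Filter.eventually_of_mem (Ioo_mem_nhds (by linarith) (by linarith)) htight) hq hden
end

section
/- Fix p > 0, a > 0, p_I > 0, c_I ∈ (0,1], R̄ > 0 and β = 1 − p/(2^{2·R̄} − 1). Let q : ℝ → ℝ be differentiable on [0,1], satisfy the tightness identity for all x ∈ [0,1], with q(x) > 0 and a·q(x)·(1 − x²) + p_I·(1 − x·c_I) + β > 0 for all x ∈ [0,1]. Then there exists c_R with 0 < c_R ≤ 1 such that the function f(x) = R_S(q(x), x) is monotonically non-decreasing on [0, c_R] and monotonically non-increasing on [c_R, 1]. -/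
/-!
With `u = a q`, `B = β + p_I` and `d = p_I c_I`, the tightness identity reads
`u² (1 - x²) + 2 u (B - d x) = K` for a constant `K`. The denominator condition at `x = 1` says
`d < B`, so the identity at `x = 1` gives `K > 0`, and the positive root `u` is
`K / (√((B - d x)² + K (1 - x²)) + (B - d x))`, a differentiable function. It increases because for
fixed `u` the left-hand side decreases in `x`.

The same identity turns the argument of the logarithm in `R_S` into an increasing affine function of
`u (a - B + d x)`, so only this product matters. Implicit differentiation shows that its derivative
is a positive multiple of `s = (a - B) x + d + d a / u`, and `s 0 > 0`. Where `s ≤ 0` the slope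
`a - B` is negative, and from there on all nonconstant terms of `s` decrease. Hence `s` changes sign
at most once, from positive to nonpositive.
-/

open Set

section SingleCrossing

variable {f s : ℝ → ℝ} {l r : ℝ}

lemma exists_crossing_point (hlr : l < r) (hs : ContinuousOn s (Icc l r)) (hl : 0 < s l)
    (hcross : ∀ x ∈ Icc l r, ∀ y ∈ Icc l r, x ≤ y → s x ≤ 0 → s y ≤ 0) :
    ∃ c, l < c ∧ c ≤ r ∧ (∀ x ∈ Ioo l c, 0 < s x) ∧ ∀ x ∈ Ioo c r, s x ≤ 0 := by
  rcases (Icc l r ∩ s ⁻¹' Iic 0).eq_empty_or_nonempty with hempty | hne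
  · refine ⟨r, hlr, le_rfl, fun x hx => ?_, by simp⟩
    by_contra! hsx
    exact eq_empty_iff_forall_notMem.1 hempty x ⟨Ioo_subset_Icc_self hx, hsx⟩
  · have hcompact : IsCompact (Icc l r ∩ s ⁻¹' Iic 0) :=
      isCompact_Icc.of_isClosed_subset (hs.preimage_isClosed_of_isClosed isClosed_Icc isClosed_Iic)
        inter_subset_left
    obtain ⟨c, ⟨hc, hsc⟩, hleast⟩ := hcompact.exists_isLeast hne
    have hlc : l < c := hc.1.lt_of_ne fun h => (h ▸ hl).not_ge hsc
    refine ⟨c, hlc, hc.2, fun x hx => ?_, fun x hx => ?_⟩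
    · by_contra! hsx
      exact hx.2.not_ge (hleast ⟨⟨hx.1.le, hx.2.le.trans hc.2⟩, hsx⟩)
    · exact hcross c hc x ⟨hlc.le.trans hx.1.le, hx.2.le⟩ hx.1.le hsc

lemma exists_monotoneOn_antitoneOn_of_single_crossing {k : ℝ → ℝ} (hlr : l < r)
    (hf : ContinuousOn f (Icc l r)) (hf' : ∀ x ∈ Ioo l r, HasDerivAt f (k x * s x) x)
    (hk : ∀ x ∈ Ioo l r, 0 ≤ k x) (hs : ContinuousOn s (Icc l r)) (hl : 0 < s l)
    (hcross : ∀ x ∈ Icc l r, ∀ y ∈ Icc l r, x ≤ y → s x ≤ 0 → s y ≤ 0) :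
    ∃ c, l < c ∧ c ≤ r ∧ MonotoneOn f (Icc l c) ∧ AntitoneOn f (Icc c r) := by
  obtain ⟨c, hlc, hcr, hpos, hnonpos⟩ := exists_crossing_point hlr hs hl hcross
  have hleft : Ioo l c ⊆ Ioo l r := Ioo_subset_Ioo_right hcr
  have hright : Ioo c r ⊆ Ioo l r := Ioo_subset_Ioo_left hlc.le
  refine ⟨c, hlc, hcr, ?_, ?_⟩
  · refine monotoneOn_of_hasDerivWithinAt_nonneg (f' := fun x => k x * s x) (convex_Icc l c)
      (hf.mono (Icc_subset_Icc_right hcr)) ?_ ?_ <;> rw [interior_Icc]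
    · exact fun x hx => (hf' x (hleft hx)).hasDerivWithinAt
    · exact fun x hx => mul_nonneg (hk x (hleft hx)) (hpos x hx).le
  · refine antitoneOn_of_hasDerivWithinAt_nonpos (f' := fun x => k x * s x) (convex_Icc c r)
      (hf.mono (Icc_subset_Icc_left hlc.le)) ?_ ?_ <;> rw [interior_Icc]
    · exact fun x hx => (hf' x (hright hx)).hasDerivWithinAt
    · exact fun x hx => mul_nonpos_of_nonneg_of_nonpos (hk x (hright hx)) (hnonpos x hx)

end SingleCrossing

/-- `u` is a positive solution on `[0, 1]` of the quadratic to which the tightness identity reduces;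
it stands for the received interference power `a q`, and the linear coefficient `B - d x` for
`β + p_I (1 - x c_I)`. -/
structure IsTightCurve (B d K : ℝ) (u : ℝ → ℝ) : Prop where
  pos : ∀ x ∈ Icc (0 : ℝ) 1, 0 < u x
  quadratic : ∀ x ∈ Icc (0 : ℝ) 1, u x ^ 2 * (1 - x ^ 2) + 2 * u x * (B - d * x) = K

/-- The part of the secondary rate that varies along a tight curve `u`. -/
def rateGain (a B d : ℝ) (u : ℝ → ℝ) (x : ℝ) : ℝ :=
  u x * (a - B + d * x)

/-- A function with the sign of the derivative of `rateGain a B d u`, normalized so that `u` enters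
only through its reciprocal. -/
noncomputable def rateSlope (a B d : ℝ) (u : ℝ → ℝ) (x : ℝ) : ℝ :=
  (a - B) * x + d + d * a / u x

lemma one_sub_sq_nonneg_of_mem_Icc {x : ℝ} (hx : x ∈ Icc (0 : ℝ) 1) : 0 ≤ 1 - x ^ 2 :=
  sub_nonneg.2 (pow_le_one₀ hx.1 hx.2)

lemma sub_mul_pos_of_mem_Icc {B d x : ℝ} (hd : 0 ≤ d) (hdB : d < B) (hx : x ∈ Icc (0 : ℝ) 1) :
    0 < B - d * x :=
  sub_pos.2 ((mul_le_of_le_one_right hd hx.2).trans_lt hdB)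

namespace IsTightCurve

variable {a B d K x : ℝ} {u : ℝ → ℝ}

lemma const_pos (h : IsTightCurve B d K u) (hdB : d < B) : 0 < K := by
  have hu := h.pos 1 (by simp)
  have hK : 2 * u 1 * (B - d) = K := by simpa using h.quadratic 1 (by simp)
  rw [← hK]
  exact mul_pos (by positivity) (sub_pos.2 hdB)

lemma mul_one_sub_sq_add_pos (h : IsTightCurve B d K u) (hd : 0 ≤ d) (hdB : d < B)
    (hx : x ∈ Icc (0 : ℝ) 1) :
    0 < u x * (1 - x ^ 2) + (B - d * x) :=
  add_pos_of_nonneg_of_pos (mul_nonneg (h.pos x hx).le (one_sub_sq_nonneg_of_mem_Icc hx))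
    (sub_mul_pos_of_mem_Icc hd hdB hx)

lemma eq_div_sqrt_add (h : IsTightCurve B d K u) (hd : 0 ≤ d) (hdB : d < B)
    (hx : x ∈ Icc (0 : ℝ) 1) :
    u x = K / (√((B - d * x) ^ 2 + K * (1 - x ^ 2)) + (B - d * x)) := by
  have hdenom := h.mul_one_sub_sq_add_pos hd hdB hx
  have hlin := sub_mul_pos_of_mem_Icc hd hdB hx
  have hsqrt : √((B - d * x) ^ 2 + K * (1 - x ^ 2)) = u x * (1 - x ^ 2) + (B - d * x) := by
    rw [Real.sqrt_eq_iff_eq_sq, ← h.quadratic x hx]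
    · ring
    · have := h.const_pos hdB
      have := one_sub_sq_nonneg_of_mem_Icc hx
      positivity
    · exact hdenom.le
  rw [hsqrt, eq_div_iff (by positivity), ← h.quadratic x hx]
  ring

lemma differentiableOn (h : IsTightCurve B d K u) (hd : 0 ≤ d) (hdB : d < B) :
    DifferentiableOn ℝ u (Icc 0 1) := by
  refine DifferentiableOn.congr (fun x hx => ?_) fun x hx => h.eq_div_sqrt_add hd hdB hx
  have hK := h.const_pos hdB
  have hlin := sub_mul_pos_of_mem_Icc hd hdB hx
  have hsq := one_sub_sq_nonneg_of_mem_Icc hx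
  have hradicand : (B - d * x) ^ 2 + K * (1 - x ^ 2) ≠ 0 := by positivity
  have hdenom : √((B - d * x) ^ 2 + K * (1 - x ^ 2)) + (B - d * x) ≠ 0 := by positivity
  fun_prop (disch := assumption)

lemma monotoneOn (h : IsTightCurve B d K u) (hd : 0 ≤ d) (hdB : d < B) :
    MonotoneOn u (Icc 0 1) := by
  intro x hx y hy hxy
  by_contra! hlt
  have huy := h.pos y hy
  have hlin := sub_mul_pos_of_mem_Icc hd hdB hy
  have hsq := one_sub_sq_nonneg_of_mem_Icc hy
  have hx0 := hx.1
  have : K < K := calc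
    K = u y ^ 2 * (1 - y ^ 2) + 2 * u y * (B - d * y) := (h.quadratic y hy).symm
    _ < u x ^ 2 * (1 - y ^ 2) + 2 * u x * (B - d * y) :=
      add_lt_add_of_le_of_lt (by gcongr) (by gcongr)
    _ ≤ u x ^ 2 * (1 - x ^ 2) + 2 * u x * (B - d * x) := by
      have := huy.trans hlt
      gcongr
    _ = K := h.quadratic x hx
  exact this.false

lemma hasDerivAt (h : IsTightCurve B d K u) (hd : 0 ≤ d) (hdB : d < B)
    (hx : x ∈ Ioo (0 : ℝ) 1) :
    HasDerivAt u (u x * (x * u x + d) / (u x * (1 - x ^ 2) + (B - d * x))) x := by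
  have hnhds : Icc (0 : ℝ) 1 ∈ nhds x := Icc_mem_nhds hx.1 hx.2
  have hu : HasDerivAt u (deriv u x) x :=
    ((h.differentiableOn hd hdB).differentiableAt hnhds).hasDerivAt
  have hsq : HasDerivAt (fun y : ℝ => 1 - y ^ 2) (-(2 * x)) x := by
    simpa using (hasDerivAt_pow 2 x).const_sub 1
  have hlin : HasDerivAt (fun y : ℝ => B - d * y) (-d) x := by
    simpa using ((hasDerivAt_id x).const_mul d).const_sub B
  have hquad := ((hu.fun_pow 2).fun_mul hsq).fun_add ((hu.const_mul 2).fun_mul hlin)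
  have hconst : HasDerivAt (fun y => u y ^ 2 * (1 - y ^ 2) + 2 * u y * (B - d * y)) 0 x :=
    (hasDerivAt_const x K).congr_of_eventuallyEq (Filter.mem_of_superset hnhds h.quadratic)
  have hdenom := h.mul_one_sub_sq_add_pos hd hdB (Ioo_subset_Icc_self hx)
  refine hu.congr_deriv ?_
  rw [eq_div_iff hdenom.ne']
  linear_combination (1 / 2) * hquad.unique hconst

lemma hasDerivAt_rateGain (h : IsTightCurve B d K u) (hd : 0 ≤ d) (hdB : d < B)
    (hx : x ∈ Ioo (0 : ℝ) 1) :
    HasDerivAt (rateGain a B d u)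
      (u x ^ 2 / (u x * (1 - x ^ 2) + (B - d * x)) * rateSlope a B d u x) x := by
  have hx' := Ioo_subset_Icc_self hx
  have hu := (h.pos x hx').ne'
  have hdenom := (h.mul_one_sub_sq_add_pos hd hdB hx').ne'
  have hlin : HasDerivAt (fun y : ℝ => a - B + d * y) d x := by
    simpa using ((hasDerivAt_id x).const_mul d).const_add (a - B)
  refine ((h.hasDerivAt hd hdB hx).mul hlin).congr_deriv ?_
  have hgain : u x ^ 2 * rateSlope a B d u x = u x * (u x * ((a - B) * x + d) + d * a) := by
    unfold rateSlope
    field_simp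
  rw [div_mul_eq_mul_div, div_mul_eq_mul_div, hgain, div_add' _ _ _ hdenom]
  ring

lemma rateSlope_nonpos_of_le (h : IsTightCurve B d K u) (ha : 0 < a) (hd : 0 < d) (hdB : d < B)
    {y : ℝ} (hx : x ∈ Icc (0 : ℝ) 1) (hy : y ∈ Icc (0 : ℝ) 1) (hxy : x ≤ y)
    (hs : rateSlope a B d u x ≤ 0) : rateSlope a B d u y ≤ 0 := by
  have hux := h.pos x hx
  have haB : a - B ≤ 0 := by
    by_contra! hpos
    have hx0 := hx.1
    have : 0 < rateSlope a B d u x := by unfold rateSlope; positivity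
    exact this.not_ge hs
  calc
    rateSlope a B d u y ≤ rateSlope a B d u x := by
      unfold rateSlope
      have hlin := mul_le_mul_of_nonpos_left hxy haB
      have hu := h.monotoneOn hd.le hdB hx hy hxy
      gcongr
    _ ≤ 0 := hs

lemma exists_monotoneOn_antitoneOn_rateGain (h : IsTightCurve B d K u) (ha : 0 < a) (hd : 0 < d)
    (hdB : d < B) :
    ∃ c, 0 < c ∧ c ≤ 1 ∧ MonotoneOn (rateGain a B d u) (Icc 0 c) ∧
      AntitoneOn (rateGain a B d u) (Icc c 1) := by
  have hu : ContinuousOn u (Icc 0 1) := (h.differentiableOn hd.le hdB).continuousOn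
  refine exists_monotoneOn_antitoneOn_of_single_crossing zero_lt_one
    (hu.mul (by fun_prop)) (fun x hx => h.hasDerivAt_rateGain hd.le hdB hx) (fun x hx => ?_) ?_ ?_
    fun x hx y hy hxy => h.rateSlope_nonpos_of_le ha hd hdB hx hy hxy
  · exact div_nonneg (sq_nonneg _) (h.mul_one_sub_sq_add_pos hd.le hdB (Ioo_subset_Icc_self hx)).le
  · have hu0 : ∀ x ∈ Icc (0 : ℝ) 1, u x ≠ 0 := fun x hx => (h.pos x hx).ne'
    unfold rateSlope
    fun_prop (disch := assumption)
  · have hu0 := h.pos 0 (by simp)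
    simp only [rateSlope, mul_zero, zero_add]
    positivity

end IsTightCurve

lemma RS_le_RS {pS cS pS' cS' : ℝ} (hpS : 0 ≤ pS) (hcS : cS ∈ Icc (0 : ℝ) 1)
    (h : pS * (pS * (1 - cS ^ 2) + 2) ≤ pS' * (pS' * (1 - cS' ^ 2) + 2)) :
    RS pS cS ≤ RS pS' cS' := by
  have hsq := one_sub_sq_nonneg_of_mem_Icc hcS
  unfold RS
  gcongr
  norm_num

section Tight

variable {p a pI cI β : ℝ} {q : ℝ → ℝ}

lemma isTightCurve_of_tight (ha : 0 < a) (hq : ∀ x ∈ Icc (0 : ℝ) 1, 0 < q x)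
    (htight : ∀ x ∈ Icc (0 : ℝ) 1, Tight p a pI cI β q x) :
    IsTightCurve (β + pI) (pI * cI)
      ((1 - β) * (p + 2 + 2 * pI) - 1 - 2 * pI - pI ^ 2 * (1 - cI ^ 2)) (fun x => a * q x) where
  pos x hx := mul_pos ha (hq x hx)
  quadratic x hx := by
    have htx := htight x hx
    unfold Tight at htx
    linear_combination htx

lemma RS_le_RS_of_rateGain_le {B d K x y : ℝ} (ha : 0 < a)
    (h : IsTightCurve B d K fun x => a * q x) (hx : x ∈ Icc (0 : ℝ) 1) (hy : y ∈ Icc (0 : ℝ) 1)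
    (hle : rateGain a B d (fun x => a * q x) x ≤ rateGain a B d (fun x => a * q x) y) :
    RS (q x) x ≤ RS (q y) y := by
  have hgain : ∀ z ∈ Icc (0 : ℝ) 1, a ^ 2 * (q z * (q z * (1 - z ^ 2) + 2)) =
      K + 2 * rateGain a B d (fun x => a * q x) z := fun z hz => by
    unfold rateGain
    linear_combination h.quadratic z hz
  refine RS_le_RS (pos_of_mul_pos_right (h.pos x hx) ha.le).le hx ?_
  refine le_of_mul_le_mul_left ?_ (pow_pos ha 2)
  rw [hgain x hx, hgain y hy]
  gcongr

end Tight

theorem stmt4_general (p a pI cI β : ℝ) (q : ℝ → ℝ) (ha : 0 < a) (hpI : 0 < pI) (hcI : 0 < cI)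
    (htight : ∀ x ∈ Icc (0 : ℝ) 1, Tight p a pI cI β q x)
    (hq : ∀ x ∈ Icc (0 : ℝ) 1, 0 < q x) (hden : 0 < pI * (1 - cI) + β) :
    ∃ cR : ℝ, 0 < cR ∧ cR ≤ 1 ∧
      MonotoneOn (fun x => RS (q x) x) (Icc 0 cR) ∧
      AntitoneOn (fun x => RS (q x) x) (Icc cR 1) := by
  have hcurve := isTightCurve_of_tight ha hq htight
  obtain ⟨c, hc0, hc1, hmono, hanti⟩ :=
    hcurve.exists_monotoneOn_antitoneOn_rateGain ha (mul_pos hpI hcI) (by linarith)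
  have hleft : Icc 0 c ⊆ Icc (0 : ℝ) 1 := Icc_subset_Icc_right hc1
  have hright : Icc c 1 ⊆ Icc (0 : ℝ) 1 := Icc_subset_Icc_left hc0.le
  exact ⟨c, hc0, hc1,
    fun x hx y hy hxy =>
      RS_le_RS_of_rateGain_le ha hcurve (hleft hx) (hleft hy) (hmono hx hy hxy),
    fun x hx y hy hxy =>
      RS_le_RS_of_rateGain_le ha hcurve (hright hy) (hright hx) (hanti hx hy hxy)⟩

/-- Lemma 1: there exists `0 < c_R ≤ 1` such that
`f x = R_S(q x, x)` is non-decreasing on `[0, c_R]` and non-increasing on `[c_R, 1]`. -/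
theorem stmt4 (p a pI cI Rbar β : ℝ) (q : ℝ → ℝ)
    (hp : 0 < p) (ha : 0 < a) (hpI : 0 < pI) (hcI : cI ∈ Set.Ioc (0:ℝ) 1)
    (hR : 0 < Rbar) (hβ : β = 1 - p / ((2:ℝ) ^ (2 * Rbar) - 1))
    (hdiff : DifferentiableOn ℝ q (Set.Icc 0 1))
    (htight : ∀ x ∈ Set.Icc (0:ℝ) 1, Tight p a pI cI β q x)
    (hq : ∀ x ∈ Set.Icc (0:ℝ) 1, 0 < q x)
    (hden : ∀ x ∈ Set.Icc (0:ℝ) 1,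
      0 < a * q x * (1 - x^2) + pI * (1 - x * cI) + β) :
    ∃ cR : ℝ, 0 < cR ∧ cR ≤ 1 ∧
      MonotoneOn (fun x => RS (q x) x) (Set.Icc 0 cR) ∧
      AntitoneOn (fun x => RS (q x) x) (Set.Icc cR 1) := by
  exact stmt4_general p a pI cI β q ha hpI hcI.1 htight hq (by simpa using hden 1 (by simp))
end

section
/- Fix p > 0, a > 0, p_I ≥ 0, c_I ∈ [0,1], R̄ > 0 and β = 1 − p/(2^{2·R̄} − 1), and assume a ≥ p_I + β. Let q : ℝ → ℝ be differentiable on [0,1], satisfy the tightness identity for all x ∈ [0,1], with q(x) > 0 and a·q(x)·(1 − x²) + p_I·(1 − x·c_I) + β > 0 for all x ∈ [0,1]. Then the function f(x) = R_S(q(x), x) is monotonically non-decreasing on all of [0,1]. -/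
/-!
With `w = a q`, tightness says that `w² (1 - x²) + 2 w (b - k x)` is constant, where `b = p_I + β`
and `k = p_I c_I`. This expression decreases in `x` and increases in `w` wherever its `w`-derivative
is positive, so `w` must increase with `x`. Along the constraint, `a² q (q (1 - x²) + 2)` equals
that constant plus `2 w (a - b + k x)`, a product of nonnegative increasing factors once `a ≥ b`.
-/

/-- The part of the primary rate constraint that depends on the secondary user, as a function of the
received interference power `w = a q` and the circularity coefficient `x`. The constraint is tight
when it takes a value determined by the primary user; in the model `b = p_I + β` and
`k = p_I c_I`. -/
def interferenceLoad (b k w x : ℝ) : ℝ :=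
  w ^ 2 * (1 - x ^ 2) + 2 * w * (b - k * x)

/-- Half the partial derivative of `interferenceLoad` with respect to `w`. -/
def interferenceSlope (b k w x : ℝ) : ℝ :=
  w * (1 - x ^ 2) + (b - k * x)

section Interference

variable {b k : ℝ}

theorem antitoneOn_interferenceLoad {w : ℝ} (hk : 0 ≤ k) (hw : 0 ≤ w) :
    AntitoneOn (interferenceLoad b k w) (Set.Ici 0) := by
  intro x (hx : 0 ≤ x) y _ hxy
  unfold interferenceLoad
  gcongr

theorem antitoneOn_interferenceSlope {w : ℝ} (hk : 0 ≤ k) (hw : 0 ≤ w) :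
    AntitoneOn (interferenceSlope b k w) (Set.Ici 0) := by
  intro x (hx : 0 ≤ x) y _ hxy
  unfold interferenceSlope
  gcongr

theorem monotone_interferenceSlope {x : ℝ} (hx : x ^ 2 ≤ 1) :
    Monotone fun w => interferenceSlope b k w x := by
  intro v w hvw
  have : 0 ≤ 1 - x ^ 2 := sub_nonneg.2 hx
  simp only [interferenceSlope]
  gcongr

theorem interferenceLoad_sub_interferenceLoad (b k v w x : ℝ) :
    interferenceLoad b k w x - interferenceLoad b k v x =
      (w - v) * (interferenceSlope b k w x + interferenceSlope b k v x) := by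
  unfold interferenceLoad interferenceSlope
  ring

theorem strictMonoOn_interferenceLoad (b k x : ℝ) :
    StrictMonoOn (fun w => interferenceLoad b k w x) {w | 0 < interferenceSlope b k w x} := by
  intro v hv w hw hvw
  rw [← sub_pos, interferenceLoad_sub_interferenceLoad]
  exact mul_pos (sub_pos.2 hvw) (add_pos hw hv)

theorem monotoneOn_of_interferenceLoad_eq {C : ℝ} {w : ℝ → ℝ} {S : Set ℝ}
    (hS : S ⊆ Set.Icc 0 1) (hk : 0 ≤ k) (hw : ∀ x ∈ S, 0 ≤ w x)
    (hload : ∀ x ∈ S, interferenceLoad b k (w x) x = C)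
    (hslope : ∀ x ∈ S, 0 < interferenceSlope b k (w x) x) :
    MonotoneOn w S := by
  intro x hx y hy hxy
  obtain ⟨hx0, hx1⟩ := hS hx
  have hy0 : 0 ≤ y := hx0.trans hxy
  by_contra! hlt
  have hslope_y : 0 < interferenceSlope b k (w y) x :=
    (hslope y hy).trans_le (antitoneOn_interferenceSlope hk (hw y hy) hx0 hy0 hxy)
  have hslope_x : 0 < interferenceSlope b k (w x) x :=
    hslope_y.trans_le (monotone_interferenceSlope (pow_le_one₀ hx0 hx1) hlt.le)
  have : C < C := calc
    C = interferenceLoad b k (w y) y := (hload y hy).symm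
    _ ≤ interferenceLoad b k (w y) x := antitoneOn_interferenceLoad hk (hw y hy) hx0 hy0 hxy
    _ < interferenceLoad b k (w x) x := strictMonoOn_interferenceLoad b k x hslope_y hslope_x hlt
    _ = C := hload x hx
  exact this.false

end Interference

theorem sq_mul_eq_interferenceLoad_add (a b k q x : ℝ) :
    a ^ 2 * (q * (q * (1 - x ^ 2) + 2)) =
      interferenceLoad b k (a * q) x + 2 * (a * q * (a - b + k * x)) := by
  unfold interferenceLoad
  ring

theorem RS_le_RS_s6 {u v x y : ℝ} (hu : 0 ≤ u) (hx : x ^ 2 ≤ 1)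
    (h : u * (u * (1 - x ^ 2) + 2) ≤ v * (v * (1 - y ^ 2) + 2)) :
    RS u x ≤ RS v y := by
  have : 0 ≤ 1 - x ^ 2 := sub_nonneg.2 hx
  unfold RS
  gcongr
  norm_num

theorem tight_iff_interferenceLoad_eq (p a pI cI β : ℝ) (q : ℝ → ℝ) (x : ℝ) :
    Tight p a pI cI β q x ↔
      interferenceLoad (pI + β) (pI * cI) (a * q x) x =
        (1 - β) * (p + 2 * (1 + pI)) - 1 - 2 * pI - pI ^ 2 * (1 - cI ^ 2) := by
  unfold Tight interferenceLoad
  constructor <;> intro h <;> linear_combination h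

theorem stmt6_general {a b k C : ℝ} {q : ℝ → ℝ} {S : Set ℝ} (hS : S ⊆ Set.Icc 0 1)
    (ha : 0 < a) (hk : 0 ≤ k) (hba : b ≤ a) (hq : ∀ x ∈ S, 0 ≤ q x)
    (hload : ∀ x ∈ S, interferenceLoad b k (a * q x) x = C)
    (hslope : ∀ x ∈ S, 0 < interferenceSlope b k (a * q x) x) :
    MonotoneOn (fun x => RS (q x) x) S := by
  have hw_nonneg : ∀ x ∈ S, 0 ≤ a * q x := fun x hx => mul_nonneg ha.le (hq x hx)
  have hw_mono : MonotoneOn (fun x => a * q x) S :=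
    monotoneOn_of_interferenceLoad_eq hS hk hw_nonneg hload hslope
  intro x hx y hy hxy
  obtain ⟨hx0, hx1⟩ := hS hx
  refine RS_le_RS_s6 (hq x hx) (pow_le_one₀ hx0 hx1)
    (le_of_mul_le_mul_left ?_ (pow_pos ha 2))
  rw [sq_mul_eq_interferenceLoad_add a b k, sq_mul_eq_interferenceLoad_add a b k,
    hload x hx, hload y hy]
  have hfactor : 0 ≤ a - b + k * x := add_nonneg (sub_nonneg.2 hba) (mul_nonneg hk hx0)
  have hprod : a * q x * (a - b + k * x) ≤ a * q y * (a - b + k * y) :=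
    mul_le_mul (hw_mono hx hy hxy) (by gcongr) hfactor (hw_nonneg y hy)
  gcongr

/-- if `a ≥ p_I + β`, the secondary rate along the tight constraint,
`f x = R_S(q x, x)`, is monotonically non-decreasing on all of `[0,1]`. -/
theorem stmt6 (p a pI cI Rbar β : ℝ) (q : ℝ → ℝ)
    (hp : 0 < p) (ha : 0 < a) (hpI : 0 ≤ pI) (hcI : cI ∈ Set.Icc (0:ℝ) 1)
    (hR : 0 < Rbar) (hβ : β = 1 - p / ((2:ℝ) ^ (2 * Rbar) - 1))
    (haβ : a ≥ pI + β)
    (hdiff : DifferentiableOn ℝ q (Set.Icc 0 1))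
    (htight : ∀ x ∈ Set.Icc (0:ℝ) 1, Tight p a pI cI β q x)
    (hq : ∀ x ∈ Set.Icc (0:ℝ) 1, 0 < q x)
    (hden : ∀ x ∈ Set.Icc (0:ℝ) 1,
      0 < a * q x * (1 - x^2) + pI * (1 - x * cI) + β) :
    MonotoneOn (fun x => RS (q x) x) (Set.Icc 0 1) := by
  refine stmt6_general subset_rfl ha (mul_nonneg hpI hcI.1) haβ (fun x hx => (hq x hx).le)
    (fun x hx => (tight_iff_interferenceLoad_eq p a pI cI β q x).1 (htight x hx)) fun x hx => ?_
  unfold interferenceSlope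
  linarith [hden x hx]
end

section
/- Fix p > 0, a > 0, p_I > 0, c_I ∈ (0,1], R̄ > 0, β = 1 − p/(2^{2·R̄} − 1), and a power budget P_S > 0. Let q : ℝ → ℝ be differentiable and strictly increasing on [0,1], satisfy the tightness identity for all x ∈ [0,1], with q(x) > 0 and a·q(x)·(1 − x²) + p_I·(1 − x·c_I) + β > 0 for all x ∈ [0,1]. Define c_B = sup{ c ∈ [0,1] : q(c) ≤ max(P_S, q(0)) }, c_R = sup{ c ∈ [0,1] : a·q(c)·c·(1 − (p_I + β)/a) + p_I·c_I·(1 + q(c)) ≥ 0 }, c* = min(c_B, c_R) and p* = min(q(c*), P_S). Then for every pair (p_S, c_S) with 0 ≤ p_S ≤ P_S, 0 ≤ c_S ≤ 1 and p_S ≤ q(c_S), one has R_S(p_S, c_S) ≤ R_S(p*, c*); that is, (p*, c*) is an optimal solution of problem 𝒫_IN. -/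
/-!
Along the curve of tight power levels `r = q x`, implicit differentiation of the tightness identity
shows that the derivative of `r * (r * (1 - x ^ 2) + 2)`, on which the rate depends monotonically,
is a positive multiple of the expression defining `c_R`. That expression changes sign at most once,
from nonnegative to negative, so the rate along the curve increases up to `c_R` and decreases
afterwards. Beyond `c_B` the power budget is the active constraint, and there increasing the
circularity coefficient can only lower the rate.
-/

open Set Filter Topology

theorem isGreatest_sSup_setOf_mem_le {α δ : Type*} [ConditionallyCompleteLinearOrder α]
    [TopologicalSpace α] [OrderTopology α] [Preorder δ] [TopologicalSpace δ]
    [OrderClosedTopology δ] {K : Set α} {f g : α → δ} (hK : IsCompact K)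
    (hf : ContinuousOn f K) (hg : ContinuousOn g K) (hne : ∃ x ∈ K, f x ≤ g x) :
    IsGreatest {x | x ∈ K ∧ f x ≤ g x} (sSup {x | x ∈ K ∧ f x ≤ g x}) :=
  (hK.of_isClosed_subset (hK.isClosed.isClosed_le hf hg) fun _ hx => hx.1).isGreatest_sSup hne

section PowerBudget

variable {α δ : Type*} {l u b : α} {q : α → δ}

theorem le_apply_of_isGreatest_of_lt [ConditionallyCompleteLinearOrder α] [DenselyOrdered α]
    [TopologicalSpace α] [OrderTopology α] [LinearOrder δ] [TopologicalSpace δ]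
    [OrderClosedTopology δ] {M : δ} (hq : ContinuousOn q (Icc l u))
    (hb : IsGreatest {x | x ∈ Icc l u ∧ q x ≤ M} b) (hbu : b < u) : M ≤ q b := by
  obtain ⟨⟨hbI, hbM⟩, hmax⟩ := hb
  have hMu : M < q u :=
    lt_of_not_ge fun h => hbu.not_ge (hmax ⟨right_mem_Icc.2 (hbI.1.trans hbI.2), h⟩)
  obtain ⟨x, hx, rfl⟩ := intermediate_value_Icc hbu.le (hq.mono (Icc_subset_Icc_left hbI.1))
    ⟨hbM, hMu.le⟩
  have hxb : x ≤ b := hmax ⟨⟨hbI.1.trans hx.1, hx.2⟩, le_rfl⟩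
  rw [le_antisymm hxb hx.1]

theorem apply_le_of_apply_le_max_of_lt [Preorder α] [LinearOrder δ] {P : δ}
    (hq : StrictMonoOn q (Icc l u)) (hb : b ∈ Icc l u) (hqb : q b ≤ max P (q l)) (hlb : l < b) :
    q b ≤ P :=
  (le_max_iff.1 hqb).resolve_right (hq (left_mem_Icc.2 (hb.1.trans hb.2)) hb hlb).not_ge

/-- Here `b` is where the budget `P` stops being slack and `r` is where the objective along the
curve `y = q x` peaks. -/
theorem objective_le_apply_min_min {γ : Type*} [LinearOrder α] [LinearOrder δ] [Preorder γ]
    {F : δ → α → γ} {r c : α} {y₀ y P : δ} (hq : MonotoneOn q (Icc l u))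
    (hF_mono : ∀ x ∈ Icc l u, MonotoneOn (F · x) (Ici y₀))
    (hF_anti : ∀ z ∈ Ici y₀, AntitoneOn (F z) (Icc l u))
    (hb : b ∈ Icc l u) (hb_le : l < b → q b ≤ P) (hb_ge : b < u → P ≤ q b)
    (hr : r ∈ Icc l u) (hup : MonotoneOn (fun x => F (q x) x) (Icc l r))
    (hdown : AntitoneOn (fun x => F (q x) x) (Icc r u))
    (hc : c ∈ Icc l u) (hy₀ : y₀ ≤ y) (hyP : y ≤ P) (hyq : y ≤ q c) :
    F y c ≤ F (min (q (min b r)) P) (min b r) := by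
  set m := min b r
  have hm : m ∈ Icc l u := ⟨le_min hb.1 hr.1, (min_le_left b r).trans hb.2⟩
  have of_budget_active (hPm : P ≤ q m) (hmc : m ≤ c) : F y c ≤ F (min (q m) P) m := by
    rw [min_eq_right hPm]
    exact (hF_mono c hc hy₀ (hy₀.trans hyP) hyP).trans (hF_anti P (hy₀.trans hyP) hm hc hmc)
  have of_budget_slack (hmP : q m ≤ P) (hcm : F (q c) c ≤ F (q m) m) :
      F y c ≤ F (min (q m) P) m := by
    rw [min_eq_left hmP]
    exact (hF_mono c hc hy₀ (hy₀.trans hyq) hyq).trans hcm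
  rcases lt_or_ge c m with hcm | hmc
  · have hlb : l < b := hc.1.trans_lt (hcm.trans_le (min_le_left b r))
    exact of_budget_slack ((hq hm hb (min_le_left b r)).trans (hb_le hlb))
      (hup ⟨hc.1, hcm.le.trans (min_le_right b r)⟩ ⟨hm.1, min_le_right b r⟩ hcm.le)
  rcases le_total P (q m) with hPm | hmP
  · exact of_budget_active hPm hmc
  rcases le_or_gt r b with hrb | hbr
  · have hmr : m = r := min_eq_right hrb
    exact of_budget_slack hmP (hdown ⟨hmr.ge, hm.2⟩ ⟨hmr.ge.trans hmc, hc.2⟩ hmc)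
  · have hmb : m = b := min_eq_left hbr.le
    exact of_budget_active (hmb ▸ hb_ge (hbr.trans_le hr.2)) hmc

end PowerBudget

/-- The effective signal-to-noise ratio of the secondary user at power `r` and circularity
coefficient `x`, for which `RS r x = (1 / 2) * logb 2 (1 + effectiveSNR r x)`. -/
def effectiveSNR (r x : ℝ) : ℝ :=
  r * (r * (1 - x ^ 2) + 2)

theorem effectiveSNR_nonneg {r x : ℝ} (hr : 0 ≤ r) (hx : x ^ 2 ≤ 1) : 0 ≤ effectiveSNR r x := by
  have : 0 ≤ 1 - x ^ 2 := sub_nonneg.2 hx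
  unfold effectiveSNR
  positivity

theorem monotoneOn_effectiveSNR_left {x : ℝ} (hx : x ^ 2 ≤ 1) :
    MonotoneOn (effectiveSNR · x) (Ici 0) := by
  intro r hr s hs hrs
  have : 0 ≤ 1 - x ^ 2 := sub_nonneg.2 hx
  rw [mem_Ici] at hr hs
  dsimp only [effectiveSNR]
  gcongr

theorem antitoneOn_effectiveSNR_right (r : ℝ) : AntitoneOn (effectiveSNR r) (Ici 0) := by
  intro x hx y _ hxy
  have hsq : x ^ 2 ≤ y ^ 2 := pow_le_pow_left₀ hx hxy 2
  unfold effectiveSNR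
  linarith [mul_le_mul_of_nonneg_left hsq (mul_self_nonneg r)]

theorem RS_le_RS_s7 {r x s y : ℝ} (hnonneg : 0 ≤ effectiveSNR r x)
    (hle : effectiveSNR r x ≤ effectiveSNR s y) : RS r x ≤ RS s y :=
  mul_le_mul_of_nonneg_left
    (Real.logb_le_logb_of_le one_lt_two (add_pos_of_pos_of_nonneg one_pos hnonneg)
      (add_le_add_right hle 1))
    one_half_pos.le

/-- The denominator in the derivative of the tight power level, where `r` is that level at the
circularity coefficient `x`. -/
def slopeDenominator (a pI cI β r x : ℝ) : ℝ :=
  a * r * (1 - x ^ 2) + pI * (1 - x * cI) + β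

/-- The factor that carries the sign of the derivative of the effective SNR along the curve of tight
power levels, where `r` is the level at the circularity coefficient `x`. -/
noncomputable def slopeFactor (a pI cI β r x : ℝ) : ℝ :=
  a * r * x * (1 - (pI + β) / a) + pI * cI * (1 + r)

section TightCurve

variable {p a pI cI β : ℝ} {q : ℝ → ℝ}

theorem slopeFactor_zero_nonneg {r : ℝ} (hk : 0 ≤ pI * cI) (hr : 0 ≤ r) :
    0 ≤ slopeFactor a pI cI β r 0 := by
  simpa [slopeFactor] using mul_nonneg hk (add_nonneg zero_le_one hr)

theorem slopeFactor_nonneg_of_le {r s x y : ℝ} (ha : 0 ≤ a) (hk : 0 ≤ pI * cI) (hr : 0 < r)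
    (hrs : r ≤ s) (hx : 0 ≤ x) (hxy : x ≤ y) (hsy : 0 ≤ slopeFactor a pI cI β s y) :
    0 ≤ slopeFactor a pI cI β r x := by
  have hs : 0 < s := hr.trans_le hrs
  rcases le_total 0 (1 - (pI + β) / a) with hA | hA
  · unfold slopeFactor
    positivity
  · -- In this case `slopeFactor a pI cI β r x / r` is antitone in both `r` and `x`.
    have hcross : s * slopeFactor a pI cI β r x = r * slopeFactor a pI cI β s y
        + r * s * a * ((y - x) * -(1 - (pI + β) / a)) + pI * cI * (s - r) := by
      unfold slopeFactor
      ring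
    have hyx : 0 ≤ (y - x) * -(1 - (pI + β) / a) :=
      mul_nonneg (sub_nonneg.2 hxy) (neg_nonneg.2 hA)
    refine nonneg_of_mul_nonneg_right (a := s) ?_ hs
    rw [hcross]
    exact add_nonneg (by positivity) (mul_nonneg hk (sub_nonneg.2 hrs))

theorem Tight.eq_const {x : ℝ} (h : Tight p a pI cI β q x) :
    a ^ 2 * (q x ^ 2 * (1 - x ^ 2)) + 2 * a * (q x * (pI * (1 - x * cI) + β)) =
      (1 - β) * (p + 2 * (1 + pI)) - 1 - 2 * pI - pI ^ 2 * (1 - cI ^ 2) := by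
  unfold Tight at h
  linarith

theorem deriv_mul_slopeDenominator_of_tight {x q' : ℝ} (ha : a ≠ 0) (hq : HasDerivAt q q' x)
    (htight : ∀ᶠ y in 𝓝 x, Tight p a pI cI β q y) :
    q' * slopeDenominator a pI cI β (q x) x = q x * (a * q x * x + pI * cI) := by
  have hderiv := (((hq.pow 2).mul (((hasDerivAt_id' x).pow 2).const_sub 1)).const_mul (a ^ 2)).add
    ((hq.mul (((((hasDerivAt_id' x).mul_const cI).const_sub 1).const_mul pI).add_const β)).const_mul
      (2 * a))
  have hconst := (hasDerivAt_const x _).congr_of_eventuallyEq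
    (htight.mono fun _ => Tight.eq_const)
  have hzero : a ^ 2 * (2 * q x * q' * (1 - x ^ 2) + q x ^ 2 * -(2 * x)) +
      2 * a * (q' * (pI * (1 - x * cI) + β) + q x * -(pI * cI)) = 0 := by
    refine Eq.trans ?_ (hderiv.unique hconst)
    simp
  refine mul_left_cancel₀ (mul_ne_zero two_ne_zero ha) ?_
  unfold slopeDenominator
  linarith

theorem hasDerivAt_effectiveSNR_of_tight {x : ℝ} (ha : a ≠ 0)
    (hden : slopeDenominator a pI cI β (q x) x ≠ 0) (hq : DifferentiableAt ℝ q x)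
    (htight : ∀ᶠ y in 𝓝 x, Tight p a pI cI β q y) :
    HasDerivAt (fun y => effectiveSNR (q y) y)
      (2 * q x / slopeDenominator a pI cI β (q x) x * slopeFactor a pI cI β (q x) x) x := by
  have hq' := hq.hasDerivAt
  have himplicit := deriv_mul_slopeDenominator_of_tight ha hq' htight
  have hderiv := hq'.mul ((hq'.mul (((hasDerivAt_id' x).pow 2).const_sub 1)).add_const 2)
  refine hderiv.congr_deriv ?_
  rw [div_mul_eq_mul_div, eq_div_iff hden]
  have hfactor : slopeFactor a pI cI β (q x) x =
      q x * x * (a - pI - β) + pI * cI * (1 + q x) := by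
    unfold slopeFactor
    field_simp
    ring
  rw [hfactor]
  unfold slopeDenominator at himplicit ⊢
  simp only [Pi.mul_apply, Pi.pow_apply, Nat.cast_ofNat, Nat.add_one_sub_one, pow_one, mul_one]
  linear_combination 2 * (q x * (1 - x ^ 2) + 1) * himplicit

theorem hasDerivWithinAt_effectiveSNR_of_tight {s : Set ℝ} {x : ℝ} (ha : a ≠ 0)
    (hdiff : DifferentiableOn ℝ q s) (htight : ∀ y ∈ s, Tight p a pI cI β q y)
    (hden : ∀ y ∈ s, 0 < slopeDenominator a pI cI β (q y) y) (hx : x ∈ interior s) :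
    HasDerivWithinAt (fun y => effectiveSNR (q y) y)
      (2 * q x / slopeDenominator a pI cI β (q x) x * slopeFactor a pI cI β (q x) x)
      (interior s) x :=
  have hs : s ∈ 𝓝 x := mem_interior_iff_mem_nhds.1 hx
  (hasDerivAt_effectiveSNR_of_tight ha (hden x (interior_subset hx)).ne'
    (hdiff.differentiableAt hs) (eventually_of_mem hs htight)).hasDerivWithinAt

theorem continuousOn_effectiveSNR {s : Set ℝ} (hq : ContinuousOn q s) :
    ContinuousOn (fun x => effectiveSNR (q x) x) s := by
  unfold effectiveSNR
  fun_prop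

theorem continuousOn_slopeFactor {s : Set ℝ} (hq : ContinuousOn q s) :
    ContinuousOn (fun x => slopeFactor a pI cI β (q x) x) s := by
  unfold slopeFactor
  fun_prop

theorem monotoneOn_effectiveSNR_of_slopeFactor_nonneg {s : Set ℝ} (hs : Convex ℝ s) (ha : a ≠ 0)
    (hdiff : DifferentiableOn ℝ q s) (htight : ∀ x ∈ s, Tight p a pI cI β q x)
    (hq : ∀ x ∈ s, 0 ≤ q x) (hden : ∀ x ∈ s, 0 < slopeDenominator a pI cI β (q x) x)
    (hfactor : ∀ x ∈ interior s, 0 ≤ slopeFactor a pI cI β (q x) x) :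
    MonotoneOn (fun x => effectiveSNR (q x) x) s :=
  monotoneOn_of_hasDerivWithinAt_nonneg hs (continuousOn_effectiveSNR hdiff.continuousOn)
    (fun _ hx => hasDerivWithinAt_effectiveSNR_of_tight ha hdiff htight hden hx)
    fun x hx => mul_nonneg (div_nonneg (mul_nonneg zero_le_two (hq x (interior_subset hx)))
      (hden x (interior_subset hx)).le) (hfactor x hx)

theorem antitoneOn_effectiveSNR_of_slopeFactor_nonpos {s : Set ℝ} (hs : Convex ℝ s) (ha : a ≠ 0)
    (hdiff : DifferentiableOn ℝ q s) (htight : ∀ x ∈ s, Tight p a pI cI β q x)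
    (hq : ∀ x ∈ s, 0 ≤ q x) (hden : ∀ x ∈ s, 0 < slopeDenominator a pI cI β (q x) x)
    (hfactor : ∀ x ∈ interior s, slopeFactor a pI cI β (q x) x ≤ 0) :
    AntitoneOn (fun x => effectiveSNR (q x) x) s :=
  antitoneOn_of_hasDerivWithinAt_nonpos hs (continuousOn_effectiveSNR hdiff.continuousOn)
    (fun _ hx => hasDerivWithinAt_effectiveSNR_of_tight ha hdiff htight hden hx)
    fun x hx => mul_nonpos_of_nonneg_of_nonpos
      (div_nonneg (mul_nonneg zero_le_two (hq x (interior_subset hx)))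
        (hden x (interior_subset hx)).le) (hfactor x hx)

theorem monotoneOn_effectiveSNR_of_slopeFactor_right_nonneg {u r : ℝ} (ha : 0 < a)
    (hk : 0 ≤ pI * cI) (hdiff : DifferentiableOn ℝ q (Icc 0 u)) (hmono : MonotoneOn q (Icc 0 u))
    (htight : ∀ x ∈ Icc 0 u, Tight p a pI cI β q x) (hq : ∀ x ∈ Icc 0 u, 0 < q x)
    (hden : ∀ x ∈ Icc 0 u, 0 < slopeDenominator a pI cI β (q x) x)
    (hr : r ∈ Icc 0 u) (hr_nonneg : 0 ≤ slopeFactor a pI cI β (q r) r) :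
    MonotoneOn (fun x => effectiveSNR (q x) x) (Icc 0 r) := by
  have hsub : Icc 0 r ⊆ Icc 0 u := Icc_subset_Icc_right hr.2
  refine monotoneOn_effectiveSNR_of_slopeFactor_nonneg (convex_Icc 0 r) ha.ne' (hdiff.mono hsub)
    (fun x hx => htight x (hsub hx)) (fun x hx => (hq x (hsub hx)).le)
    (fun x hx => hden x (hsub hx)) fun x hx => ?_
  have hx' : x ∈ Icc 0 r := interior_subset hx
  exact slopeFactor_nonneg_of_le ha.le hk (hq x (hsub hx')) (hmono (hsub hx') hr hx'.2) hx'.1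
    hx'.2 hr_nonneg

theorem antitoneOn_effectiveSNR_of_mem_upperBounds {l u r : ℝ} (ha : a ≠ 0)
    (hdiff : DifferentiableOn ℝ q (Icc l u))
    (htight : ∀ x ∈ Icc l u, Tight p a pI cI β q x) (hq : ∀ x ∈ Icc l u, 0 ≤ q x)
    (hden : ∀ x ∈ Icc l u, 0 < slopeDenominator a pI cI β (q x) x)
    (hlr : l ≤ r) (hr : r ∈ upperBounds {x | x ∈ Icc l u ∧ 0 ≤ slopeFactor a pI cI β (q x) x}) :
    AntitoneOn (fun x => effectiveSNR (q x) x) (Icc r u) := by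
  have hsub : Icc r u ⊆ Icc l u := Icc_subset_Icc_left hlr
  refine antitoneOn_effectiveSNR_of_slopeFactor_nonpos (convex_Icc r u) ha (hdiff.mono hsub)
    (fun x hx => htight x (hsub hx)) (fun x hx => hq x (hsub hx))
    (fun x hx => hden x (hsub hx)) fun x hx => ?_
  rw [interior_Icc] at hx
  exact le_of_not_ge fun h => hx.1.not_ge (hr ⟨hsub (Ioo_subset_Icc_self hx), h⟩)

end TightCurve

/-- Theorem 1: with `c_B` and `c_R` as below, the pair
`(p* , c*) = (min(q(c*), P_S), min(c_B, c_R))` is an optimal solution of `𝒫_IN`: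
any feasible `(p_S, c_S)` yields a secondary rate not exceeding `R_S(p*, c*)`. -/
theorem stmt7 (p a pI cI Rbar β PS : ℝ) (q : ℝ → ℝ)
    (hp : 0 < p) (ha : 0 < a) (hpI : 0 < pI) (hcI : cI ∈ Set.Ioc (0:ℝ) 1)
    (hR : 0 < Rbar) (hβ : β = 1 - p / ((2:ℝ) ^ (2 * Rbar) - 1)) (hPS : 0 < PS)
    (hdiff : DifferentiableOn ℝ q (Set.Icc 0 1))
    (hmono : StrictMonoOn q (Set.Icc 0 1))
    (htight : ∀ x ∈ Set.Icc (0:ℝ) 1, Tight p a pI cI β q x)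
    (hq : ∀ x ∈ Set.Icc (0:ℝ) 1, 0 < q x)
    (hden : ∀ x ∈ Set.Icc (0:ℝ) 1,
      0 < a * q x * (1 - x^2) + pI * (1 - x * cI) + β)
    (cB cR cstar pstar : ℝ)
    (hcB : cB = sSup {c : ℝ | c ∈ Set.Icc (0:ℝ) 1 ∧ q c ≤ max PS (q 0)})
    (hcR : cR = sSup {c : ℝ | c ∈ Set.Icc (0:ℝ) 1 ∧
      0 ≤ a * q c * c * (1 - (pI + β) / a) + pI * cI * (1 + q c)})
    (hcstar : cstar = min cB cR)
    (hpstar : pstar = min (q cstar) PS) :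
    ∀ pS cS : ℝ, 0 ≤ pS → pS ≤ PS → 0 ≤ cS → cS ≤ 1 → pS ≤ q cS →
      RS pS cS ≤ RS pstar cstar := by
  intro pS cS hpS hpSP hcS hcS1 hpSq
  have hcont : ContinuousOn q (Icc 0 1) := hdiff.continuousOn
  have hzero : (0 : ℝ) ∈ Icc (0 : ℝ) 1 := left_mem_Icc.2 zero_le_one
  have hk : 0 ≤ pI * cI := (mul_pos hpI hcI.1).le
  have hcB_max : IsGreatest {c | c ∈ Icc (0 : ℝ) 1 ∧ q c ≤ max PS (q 0)} cB := by
    rw [hcB]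
    exact isGreatest_sSup_setOf_mem_le isCompact_Icc hcont continuousOn_const
      ⟨0, hzero, le_max_right PS (q 0)⟩
  have hcR_max : IsGreatest {c | c ∈ Icc (0 : ℝ) 1 ∧ 0 ≤ slopeFactor a pI cI β (q c) c} cR := by
    rw [hcR]
    exact isGreatest_sSup_setOf_mem_le isCompact_Icc continuousOn_const
      (continuousOn_slopeFactor hcont) ⟨0, hzero, slopeFactor_zero_nonneg hk (hq 0 hzero).le⟩
  have hup : MonotoneOn (fun c => effectiveSNR (q c) c) (Icc 0 cR) :=
    monotoneOn_effectiveSNR_of_slopeFactor_right_nonneg ha hk hdiff hmono.monotoneOn htight hq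
      hden hcR_max.1.1 hcR_max.1.2
  have hdown : AntitoneOn (fun c => effectiveSNR (q c) c) (Icc cR 1) :=
    antitoneOn_effectiveSNR_of_mem_upperBounds ha.ne' hdiff htight (fun c hc => (hq c hc).le) hden
      hcR_max.1.1.1 hcR_max.2
  rw [hpstar, hcstar]
  exact RS_le_RS_s7 (effectiveSNR_nonneg hpS (pow_le_one₀ hcS hcS1)) <|
    objective_le_apply_min_min hmono.monotoneOn
      (fun _ hc => monotoneOn_effectiveSNR_left (pow_le_one₀ hc.1 hc.2))
      (fun r _ => (antitoneOn_effectiveSNR_right r).mono Icc_subset_Ici_self)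
      hcB_max.1.1 (apply_le_of_apply_le_max_of_lt hmono hcB_max.1.1 hcB_max.1.2)
      (fun h => (le_max_left PS (q 0)).trans (le_apply_of_isGreatest_of_lt hcont hcB_max h))
      hcR_max.1.1 hup hdown ⟨hcS, hcS1⟩ hpS hpSP hpSq
end

section
/- Fix p > 0, a > 0, p_I ≥ 0, c_I ∈ [0,1], R̄ > 0, β = 1 − p/(2^{2·R̄} − 1), p̄ = p·2^{R̄}/(2^{2·R̄} − 1), and write B₁ = p_I·(1 − c_I) + β and B₂ = p_I·(1 + c_I) + β. Assume B₁ > 0 and p̄² − B₁·B₂ > 0, and let q₁ = (p̄² − B₁·B₂)/(2·a·B₁). Then a·q₁·(1 − (p_I + β)/a) + p_I·c_I·(1 + q₁) ≥ 0 if and only if a ≥ ξ, where ξ = B₁·(p̄² − B₁·B₂)/(p̄² − B₁²). In particular, the circularity coefficient c_R of Theorem 1 equals 1 if and only if a ≥ ξ. -/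
/-!
Put `s = p_I c_I`, so that `p_I + β = B₁ + s` and `B₂ = B₁ + 2 s`. The quantity whose sign is in
question is then the affine function `q₁ (a - B₁) + s` of `q₁`, and inserting
`q₁ = (p̄² - B₁ B₂) / (2 a B₁)` turns it into
`(a (p̄² - B₁²) - B₁ (p̄² - B₁ B₂)) / (2 a B₁)`, whose numerator is affine in `a`, with positive
slope `p̄² - B₁² ≥ p̄² - B₁ B₂ > 0` and root `ξ`.
-/

section Field

variable {K : Type*} [Field K] {a : K}

theorem mul_one_sub_add_div_add_mul_one_add (ha : a ≠ 0) (B q s : K) :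
    a * q * (1 - (B + s) / a) + s * (1 + q) = q * (a - B) + s := by
  field_simp
  ring

theorem tight_power_mul_sub_add_eq_div [NeZero (2 : K)] {B : K} (ha : a ≠ 0) (hB : B ≠ 0)
    (P s : K) :
    (P - B * (B + 2 * s)) / (2 * a * B) * (a - B) + s =
      (a * (P - B ^ 2) - B * (P - B * (B + 2 * s))) / (2 * a * B) := by
  field_simp
  ring

end Field

theorem tight_power_mul_sub_add_nonneg_iff {K : Type*} [Field K] [LinearOrder K]
    [IsStrictOrderedRing K] {a B P : K} (ha : 0 < a) (hB : 0 < B) (hP : B ^ 2 < P) (s : K) :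
    0 ≤ (P - B * (B + 2 * s)) / (2 * a * B) * (a - B) + s ↔
      B * (P - B * (B + 2 * s)) / (P - B ^ 2) ≤ a := by
  have denom_pos : 0 < 2 * a * B := by positivity
  rw [tight_power_mul_sub_add_eq_div ha.ne' hB.ne', le_div_iff₀ denom_pos, zero_mul,
    sub_nonneg, div_le_iff₀ (sub_pos.2 hP)]

/-- with `q₁ = q(1)` in closed form, the non-decreasing condition at
`c = 1` holds iff `a ≥ ξ`; i.e. `c_R = 1` in Theorem 1 iff `a ≥ ξ`. -/
theorem stmt9 (p a pI cI Rbar β pbar B1 B2 q1 ξ : ℝ)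
    (hp : 0 < p) (ha : 0 < a) (hpI : 0 ≤ pI) (hcI : cI ∈ Set.Icc (0:ℝ) 1)
    (hR : 0 < Rbar) (hβ : β = 1 - p / ((2:ℝ) ^ (2 * Rbar) - 1))
    (hpbar : pbar = p * (2:ℝ) ^ Rbar / ((2:ℝ) ^ (2 * Rbar) - 1))
    (hB1def : B1 = pI * (1 - cI) + β) (hB2def : B2 = pI * (1 + cI) + β)
    (hB1 : 0 < B1) (hnum : 0 < pbar^2 - B1 * B2)
    (hq1 : q1 = (pbar^2 - B1 * B2) / (2 * a * B1))
    (hξ : ξ = B1 * (pbar^2 - B1 * B2) / (pbar^2 - B1^2)) :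
    0 ≤ a * q1 * (1 - (pI + β) / a) + pI * cI * (1 + q1) ↔ a ≥ ξ := by
  have mean_eq : pI + β = B1 + pI * cI := by rw [hB1def]; ring
  have B2_eq : B2 = B1 + 2 * (pI * cI) := by rw [hB1def, hB2def]; ring
  have B1_le_B2 : B1 ≤ B2 := by linarith [mul_nonneg hpI hcI.1]
  have sq_lt : B1 ^ 2 < pbar ^ 2 := calc
    B1 ^ 2 = B1 * B1 := sq B1
    _ ≤ B1 * B2 := by gcongr
    _ < pbar ^ 2 := sub_pos.1 hnum
  rw [mean_eq, mul_one_sub_add_div_add_mul_one_add ha.ne', hq1, hξ, B2_eq]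
  exact tight_power_mul_sub_add_nonneg_iff ha hB1 sq_lt (pI * cI)
end

section
/- Let 𝒦 be a finite nonempty index set, a_k > 0 for k ∈ 𝒦 with A = Σ_{k∈𝒦} a_k, let ν'_k > 0 with Σ_{k∈𝒦} ν'_k = 1, let t > 0 and c ∈ [0,1], and assume ν'_k·(t + A) − a_k > 0 for every k. Define p_k = ν'_k·(t + A)/a_k − 1 and c_k = ν'_k·t·c / (ν'_k·(t + A) − a_k). Then: (i) p_k > 0 for all k; (ii) Σ_{k∈𝒦} a_k·p_k = t; (iii) Σ_{k∈𝒦} a_k·p_k·c_k = t·c; and (iv) for every k, R_k(p_k, c_k) = (1/2)·log₂( 1 + (t/A)·((t/A)·(1 − c²) + 2) ) + log₂( ν'_k·A / a_k ). -/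
/-- Rate of a secondary user after zero-forcing. -/
noncomputable def Rk (pk ck : ℝ) : ℝ :=
  (1/2) * Real.logb 2 (1 + pk * (pk * (1 - ck^2) + 2))

/-!
The argument of the logarithm in `Rk p c` is `(1 + p)² - (p c)²`, which is homogeneous of degree two
in the pair `(1 + p, p c)`. At the stationary point this pair is, for user `k`, the pair
`(1 + t/A, (t/A) c)` of the equivalent single-user channel scaled by `ν k * A / a k`, so the
rates differ by the logarithm of that factor.
-/

theorem one_add_mul_mul_one_sub_sq_add_two {R : Type*} [CommRing R] (p c : R) :
    1 + p * (p * (1 - c ^ 2) + 2) = (1 + p) ^ 2 - (p * c) ^ 2 := by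
  ring

theorem one_add_mul_mul_one_sub_sq_add_two_pos_s13 {R : Type*} [CommRing R] [LinearOrder R]
    [IsStrictOrderedRing R] {p c : R} (hp : 0 ≤ p) (hc : |c| ≤ 1) :
    0 < 1 + p * (p * (1 - c ^ 2) + 2) := by
  have hc_sq : 0 ≤ 1 - c ^ 2 := sub_nonneg.2 ((sq_le_one_iff_abs_le_one c).2 hc)
  positivity

theorem Rk_eq_add_logb_of_scaling {p c q d r : ℝ} (hr : r ≠ 0)
    (hp : 1 + p = r * (1 + q)) (hpc : p * c = r * (q * d))
    (hne : 1 + q * (q * (1 - d ^ 2) + 2) ≠ 0) :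
    Rk p c = Rk q d + Real.logb 2 r := by
  have hscale : 1 + p * (p * (1 - c ^ 2) + 2) =
      (1 + q * (q * (1 - d ^ 2) + 2)) * r ^ 2 := by
    rw [one_add_mul_mul_one_sub_sq_add_two, one_add_mul_mul_one_sub_sq_add_two, hp, hpc]
    ring
  rw [Rk, Rk, hscale, Real.logb_mul hne (pow_ne_zero 2 hr), Real.logb_pow]
  push_cast
  ring

section Stationary

variable {𝕜 : Type*} [Field 𝕜]

/-- The stationary transmit power `p_k` of a user with interference gain `a` and normalized
multiplier `ν`, where `t` is the total interference power and `A` the total interference gain. -/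
def stationaryPower (a ν t A : 𝕜) : 𝕜 :=
  ν * (t + A) / a - 1

/-- The stationary circularity coefficient `c_k` of a user with interference gain `a` and normalized
multiplier `ν`, where `t` and `c` are the power and the circularity coefficient of the aggregate
interference and `A` is the total interference gain. -/
def stationaryCircularity (a ν t c A : 𝕜) : 𝕜 :=
  ν * t * c / (ν * (t + A) - a)

theorem stationaryPower_pos [LinearOrder 𝕜] [IsStrictOrderedRing 𝕜] {a ν t A : 𝕜} (ha : 0 < a)
    (h : 0 < ν * (t + A) - a) : 0 < stationaryPower a ν t A :=
  sub_pos.2 ((one_lt_div ha).2 (sub_pos.1 h))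

variable {a ν t c A : 𝕜}

theorem mul_stationaryPower (ha : a ≠ 0) : a * stationaryPower a ν t A = ν * (t + A) - a := by
  rw [stationaryPower, mul_sub_one, mul_div_cancel₀ _ ha]

theorem mul_stationaryPower_mul_stationaryCircularity (ha : a ≠ 0) (h : ν * (t + A) - a ≠ 0) :
    a * stationaryPower a ν t A * stationaryCircularity a ν t c A = ν * (t * c) := by
  rw [mul_stationaryPower ha, stationaryCircularity, mul_div_cancel₀ _ h, mul_assoc]

theorem one_add_stationaryPower (hA : A ≠ 0) :
    1 + stationaryPower a ν t A = ν * A / a * (1 + t / A) := by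
  rw [stationaryPower]
  field_simp
  ring

theorem stationaryPower_mul_stationaryCircularity (ha : a ≠ 0) (hA : A ≠ 0)
    (h : ν * (t + A) - a ≠ 0) :
    stationaryPower a ν t A * stationaryCircularity a ν t c A = ν * A / a * (t / A * c) := by
  apply mul_left_cancel₀ ha
  rw [← mul_assoc, mul_stationaryPower_mul_stationaryCircularity ha h]
  field_simp

variable {ι : Type*} {s : Finset ι} {a ν : ι → 𝕜}

theorem sum_mul_stationaryPower (ha : ∀ k ∈ s, a k ≠ 0) (hν : ∑ k ∈ s, ν k = 1) :
    ∑ k ∈ s, a k * stationaryPower (a k) (ν k) t (∑ j ∈ s, a j) = t := by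
  rw [Finset.sum_congr rfl fun k hk ↦ mul_stationaryPower (ha k hk), Finset.sum_sub_distrib,
    ← Finset.sum_mul, hν, one_mul, add_sub_cancel_right]

theorem sum_mul_stationaryPower_mul_stationaryCircularity (ha : ∀ k ∈ s, a k ≠ 0)
    (hν : ∑ k ∈ s, ν k = 1) (h : ∀ k ∈ s, ν k * (t + A) - a k ≠ 0) :
    ∑ k ∈ s, a k * stationaryPower (a k) (ν k) t A * stationaryCircularity (a k) (ν k) t c A =
      t * c := by
  rw [Finset.sum_congr rfl fun k hk ↦
      mul_stationaryPower_mul_stationaryCircularity (ha k hk) (h k hk),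
    ← Finset.sum_mul, hν, one_mul]

end Stationary

theorem Rk_stationaryPower_stationaryCircularity {a ν t c A : ℝ} (ha : a ≠ 0) (hν : ν ≠ 0)
    (hA : A ≠ 0) (h : ν * (t + A) - a ≠ 0)
    (hne : 1 + t / A * (t / A * (1 - c ^ 2) + 2) ≠ 0) :
    Rk (stationaryPower a ν t A) (stationaryCircularity a ν t c A) =
      Rk (t / A) c + Real.logb 2 (ν * A / a) :=
  Rk_eq_add_logb_of_scaling (div_ne_zero (mul_ne_zero hν hA) ha) (one_add_stationaryPower hA)
    (stationaryPower_mul_stationaryCircularity ha hA h) hne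

/-- stationarity consequences (Eqs. (27)–(30) in the paper) that
transform the secondary MAC into an equivalent single-user channel with
interference gain `A = Σ_k a_k`. -/
theorem stmt13 {ι : Type*} (𝒦 : Finset ι) (h𝒦 : 𝒦.Nonempty)
    (a ν pk ck : ι → ℝ) (t c : ℝ)
    (ha : ∀ k ∈ 𝒦, 0 < a k) (hν : ∀ k ∈ 𝒦, 0 < ν k)
    (hνsum : ∑ k ∈ 𝒦, ν k = 1) (ht : 0 < t) (hc : c ∈ Set.Icc (0:ℝ) 1)
    (hpos : ∀ k ∈ 𝒦, 0 < ν k * (t + ∑ j ∈ 𝒦, a j) - a k)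
    (hpk : ∀ k ∈ 𝒦, pk k = ν k * (t + ∑ j ∈ 𝒦, a j) / a k - 1)
    (hck : ∀ k ∈ 𝒦, ck k = ν k * t * c / (ν k * (t + ∑ j ∈ 𝒦, a j) - a k)) :
    (∀ k ∈ 𝒦, 0 < pk k) ∧
    (∑ k ∈ 𝒦, a k * pk k = t) ∧
    (∑ k ∈ 𝒦, a k * pk k * ck k = t * c) ∧
    (∀ k ∈ 𝒦, Rk (pk k) (ck k) =
      (1/2) * Real.logb 2 (1 + (t / ∑ j ∈ 𝒦, a j) *
        ((t / ∑ j ∈ 𝒦, a j) * (1 - c^2) + 2)) +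
      Real.logb 2 (ν k * (∑ j ∈ 𝒦, a j) / a k)) := by
  have hA : 0 < ∑ j ∈ 𝒦, a j := Finset.sum_pos ha h𝒦
  have ha_ne : ∀ k ∈ 𝒦, a k ≠ 0 := fun k hk ↦ (ha k hk).ne'
  have hpos_ne : ∀ k ∈ 𝒦, ν k * (t + ∑ j ∈ 𝒦, a j) - a k ≠ 0 := fun k hk ↦ (hpos k hk).ne'
  have hc_abs : |c| ≤ 1 := (abs_of_nonneg hc.1).trans_le hc.2
  change ∀ k ∈ 𝒦, pk k = stationaryPower (a k) (ν k) t (∑ j ∈ 𝒦, a j) at hpk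
  change ∀ k ∈ 𝒦, ck k = stationaryCircularity (a k) (ν k) t c (∑ j ∈ 𝒦, a j) at hck
  refine ⟨fun k hk ↦ ?_, ?_, ?_, fun k hk ↦ ?_⟩
  · rw [hpk k hk]
    exact stationaryPower_pos (ha k hk) (hpos k hk)
  · rw [Finset.sum_congr rfl fun k hk ↦ by rw [hpk k hk]]
    exact sum_mul_stationaryPower ha_ne hνsum
  · rw [Finset.sum_congr rfl fun k hk ↦ by rw [hpk k hk, hck k hk]]
    exact sum_mul_stationaryPower_mul_stationaryCircularity ha_ne hνsum hpos_ne
  · rw [hpk k hk, hck k hk]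
    exact Rk_stationaryPower_stationaryCircularity (ha_ne k hk) (hν k hk).ne' hA.ne'
      (hpos_ne k hk) (one_add_mul_mul_one_sub_sq_add_two_pos_s13 (by positivity) hc_abs).ne'
end

section
/- Let 𝒦 be a finite nonempty index set, a_k > 0 with A = Σ_{k∈𝒦} a_k, ν'_k > 0 with Σ_{k∈𝒦} ν'_k = 1, t > 0, c ∈ [0,1], r ≥ 0 and α_k > 0, with ν'_k·(t + A) − a_k > 0 for all k. Define p_k = ν'_k·(t + A)/a_k − 1, c_k = ν'_k·t·c / (ν'_k·(t + A) − a_k), and D = 1 + (t/A)·((t/A)·(1 − c²) + 2). Then for each k, R_k(p_k, c_k) ≥ α_k·r if and only if ν'_k ≥ 2^{α_k·r}·a_k / (A·√D). -/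
/-!
The argument of the logarithm in the rate `Rk p c` is the quadratic form `x ^ 2 - y ^ 2` evaluated
at `(1 + p, p * c)`. For user `k` this point is `ν k * A / a k` times the point
`(1 + t / A, t / A * c)` belonging to the equivalent single user, so by homogeneity the argument
for user `k` is `(ν k * A / a k) ^ 2 * D`. Since `2 ^ Rk` is the square root of the argument, the
rate constraint becomes linear in `ν k`.
-/

/-- The argument of the logarithm in `Rk`. The `D` of the equivalent single user is
`rateArg (t / A) c`. -/
def rateArg (p c : ℝ) : ℝ :=
  1 + p * (p * (1 - c ^ 2) + 2)

theorem rateArg_eq_sq_sub_sq (p c : ℝ) : rateArg p c = (1 + p) ^ 2 - (p * c) ^ 2 := by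
  unfold rateArg
  ring

theorem rateArg_pos {p c : ℝ} (hp : 0 ≤ p) (hc : |c| ≤ 1) : 0 < rateArg p c := by
  have hc_sq : 0 ≤ 1 - c ^ 2 := sub_nonneg.mpr ((sq_le_one_iff_abs_le_one c).mpr hc)
  unfold rateArg
  positivity

theorem rateArg_eq_sq_mul_rateArg {p c q d s : ℝ} (hone_add : 1 + p = s * (1 + q))
    (hmul : p * c = s * (q * d)) : rateArg p c = s ^ 2 * rateArg q d := by
  rw [rateArg_eq_sq_sub_sq, rateArg_eq_sq_sub_sq, hone_add, hmul]
  ring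

theorem le_Rk_iff_rpow_le_sqrt_rateArg {p c ρ : ℝ} (hpos : 0 < rateArg p c) :
    ρ ≤ Rk p c ↔ (2 : ℝ) ^ ρ ≤ √(rateArg p c) := by
  have hRk : Rk p c = Real.logb 2 √(rateArg p c) := by
    rw [Real.sqrt_eq_rpow, Real.logb_rpow_eq_mul_logb_of_pos hpos, Rk, rateArg]
  rw [hRk, Real.le_logb_iff_rpow_le one_lt_two (Real.sqrt_pos.mpr hpos)]

theorem rateArg_user_eq {a A ν t : ℝ} (c : ℝ) (ha : a ≠ 0) (hA : A ≠ 0)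
    (hpower : ν * (t + A) - a ≠ 0) :
    rateArg (ν * (t + A) / a - 1) (ν * t * c / (ν * (t + A) - a)) =
      (ν * A / a) ^ 2 * rateArg (t / A) c := by
  apply rateArg_eq_sq_mul_rateArg
  · field_simp
    ring
  · field_simp

theorem stmt14_general {a A ν t c : ℝ} (ρ : ℝ) (ha : 0 < a) (hA : 0 < A) (hν : 0 < ν)
    (hpower : ν * (t + A) - a ≠ 0) (hD : 0 < rateArg (t / A) c) :
    Rk (ν * (t + A) / a - 1) (ν * t * c / (ν * (t + A) - a)) ≥ ρ ↔
      ν ≥ (2 : ℝ) ^ ρ * a / (A * √(rateArg (t / A) c)) := by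
  have hscale : 0 < ν * A / a := by positivity
  have harg := rateArg_user_eq c ha.ne' hA.ne' hpower
  have hsqrt : √(rateArg (ν * (t + A) / a - 1) (ν * t * c / (ν * (t + A) - a))) =
      ν * (A * √(rateArg (t / A) c)) / a := by
    rw [harg, Real.sqrt_mul (sq_nonneg _), Real.sqrt_sq hscale.le]
    ring
  have hpos : 0 < rateArg (ν * (t + A) / a - 1) (ν * t * c / (ν * (t + A) - a)) := by
    rw [harg]
    positivity
  rw [ge_iff_le, ge_iff_le, le_Rk_iff_rpow_le_sqrt_rateArg hpos, hsqrt, le_div_iff₀ ha,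
    div_le_iff₀ (by positivity)]

/-- the individual rate constraint `R_k ≥ α_k·r` of the feasibility
problem `𝒫_ℓ` holds iff the normalized multiplier satisfies
`ν'_k ≥ 2^{α_k·r}·a_k / (A·√D)` (Eq. (31) in the paper). -/
theorem stmt14 {ι : Type*} (𝒦 : Finset ι) (h𝒦 : 𝒦.Nonempty)
    (a ν pk ck α : ι → ℝ) (t c r : ℝ)
    (ha : ∀ k ∈ 𝒦, 0 < a k) (hν : ∀ k ∈ 𝒦, 0 < ν k)
    (hνsum : ∑ k ∈ 𝒦, ν k = 1) (ht : 0 < t) (hc : c ∈ Set.Icc (0:ℝ) 1)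
    (hr : 0 ≤ r) (hα : ∀ k ∈ 𝒦, 0 < α k)
    (hpos : ∀ k ∈ 𝒦, 0 < ν k * (t + ∑ j ∈ 𝒦, a j) - a k)
    (hpk : ∀ k ∈ 𝒦, pk k = ν k * (t + ∑ j ∈ 𝒦, a j) / a k - 1)
    (hck : ∀ k ∈ 𝒦, ck k = ν k * t * c / (ν k * (t + ∑ j ∈ 𝒦, a j) - a k))
    (D : ℝ)
    (hD : D = 1 + (t / ∑ j ∈ 𝒦, a j) * ((t / ∑ j ∈ 𝒦, a j) * (1 - c^2) + 2)) :
    ∀ k ∈ 𝒦, (Rk (pk k) (ck k) ≥ α k * r ↔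
      ν k ≥ (2:ℝ) ^ (α k * r) * a k / ((∑ j ∈ 𝒦, a j) * Real.sqrt D)) := by
  intro k hk
  have hA : 0 < ∑ j ∈ 𝒦, a j := Finset.sum_pos ha h𝒦
  have hc_abs : |c| ≤ 1 := abs_le.mpr ⟨by linarith [hc.1], hc.2⟩
  rw [hpk k hk, hck k hk, hD]
  exact stmt14_general (α k * r) (ha k hk) hA (hν k hk) (hpos k hk).ne'
    (rateArg_pos (div_pos ht hA).le hc_abs)
end
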